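/- For all integers k ≥ 1, s ≥ 0, r ≥ 0 with s and r both even and s + r < k, GR_k((k−s−r)P3, sK3, rH3) = 2·5^(s/2)·17^(r/2) + 1. -/

import Mathlib

open SimpleGraph

/-- A rainbow triangle in an edge-coloring of a complete graph: three distinct
vertices whose three pairwise edges receive three pairwise distinct colors. -/
def HasRainbowTriangle {n k : ℕ} (c : Fin n → Fin n → Fin k) : Prop :=
  ∃ u v w : Fin n, u ≠ v ∧ u ≠ w ∧ v ≠ w ∧
    c u v ≠ c u w ∧ c u v ≠ c v w ∧ c u w ≠ c v w

/-- A Gallai `k`-coloring of `K_n`: a symmetric edge-coloring with no rainbow triangle. -/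
def IsGallaiColoring {n k : ℕ} (c : Fin n → Fin n → Fin k) : Prop :=
  (∀ u v, c u v = c v u) ∧ ¬ HasRainbowTriangle c

/-- A monochromatic copy of the graph `F` in color `i`: an injection of the vertices
of `F` into the vertices of `K_n` mapping every edge of `F` to an edge colored `i`. -/
def HasMonoCopy {V : Type} (F : SimpleGraph V) {n k : ℕ}
    (c : Fin n → Fin n → Fin k) (i : Fin k) : Prop :=
  ∃ f : V → Fin n, Function.Injective f ∧ ∀ a b, F.Adj a b → c (f a) (f b) = i

/-- The Gallai-Ramsey number `GR(F₁, …, F_k)`: the least `n` such that every Gallai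
`k`-coloring of `K_n` contains, for some color `i`, a monochromatic copy of `Fᵢ`
in color `i`. -/
noncomputable def GR (k : ℕ) (F : Fin k → Σ V : Type, SimpleGraph V) : ℕ :=
  sInf {n : ℕ | ∀ c : Fin n → Fin n → Fin k, IsGallaiColoring c →
    ∃ i : Fin k, HasMonoCopy (F i).2 c i}

/-- The triangle `K₃`. -/
def GK3 : SimpleGraph (Fin 3) := ⊤

/-- The path `P₃` on three vertices (edges 0–1 and 1–2). -/
def GP3 : SimpleGraph (Fin 3) := SimpleGraph.fromRel (fun a _ => a = 1)

/-- `H₁`: a `K₄` on `{0,1,2,3}` together with the extra vertex `4` adjacent to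
exactly the vertex `3`. -/
def GH1 : SimpleGraph (Fin 5) :=
  SimpleGraph.fromRel (fun a b => (a ≠ 4 ∧ b ≠ 4) ∨ (a = 3 ∧ b = 4))

/-- `H₂`: `K₅` minus the two edges 0–1 and 1–2 of a path on three vertices. -/
def GH2 : SimpleGraph (Fin 5) :=
  (⊤ : SimpleGraph (Fin 5)) \
    SimpleGraph.fromRel (fun a b => (a = 0 ∧ b = 1) ∨ (a = 1 ∧ b = 2))

/-- `H₃`: `K₅` minus the edge 0–1. -/
def GH3 : SimpleGraph (Fin 5) :=
  (⊤ : SimpleGraph (Fin 5)) \ SimpleGraph.fromRel (fun a b => a = 0 ∧ b = 1)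
/-- The family of graphs for `GR_k((k-s-r)P₃, sK₃, rH₃)`: the graph `H₃` in each of
the first `r` colors, the triangle `K₃` in each of the next `s` colors, and the path
`P₃` in each of the remaining `k - s - r` colors. -/
def mixPKH (k s r : ℕ) : Fin k → Σ V : Type, SimpleGraph V :=
  fun i =>
    if (i : ℕ) < r then ⟨Fin 5, GH3⟩
    else if (i : ℕ) < r + s then ⟨Fin 3, GK3⟩
    else ⟨Fin 3, GP3⟩

/-!
Write `P₃`, `K₄ - e` and `K₅ - e` as `K_{l + 3}` minus an edge, for the level `l = 0, 1, 2`, and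
give the level `l` the weight `w l = 1, √5, √17`. A color that avoids `K₃` avoids `K₄ - e`.

Upper bound: if every color `i` avoids `K_{l i + 3}` minus an edge, a Gallai coloring has at most
`2 * ∏ i, w (l i)` vertices. This is shown by induction on the vertex set. If one color joins two
complementary sets completely, its level is lower on each side. Otherwise Gallai's theorem gives a
partition in which any two parts are joined completely by one of two colors, and every part is
joined to some vertex in each of them. If a part contains an edge of one of these colors, then the
levels are lower on the part and on its two neighborhoods, which cover everything. If not, the parts
have at most `2 * M` vertices, where `M` is the product of the weights of the other colors. Keeping
two vertices of each part leaves a two-coloring in which only a matching of twin pairs is uncolored,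
and the Ramsey numbers `R(3, 3) = 6`, `R(3, 4) = 9` and `R(4, 4) = 18` bound its size.

Lower bound: substitute the two-colorings of `K₅` without triangles and of `K₁₇` without `K₄` into
each other, using a new pair of colors every time, and then double every vertex, joining the two
copies by a color of level `0`.
-/

namespace GallaiRamsey

open scoped Classical Finset

/-! ### Gallai colorings and the Gallai partition theorem -/

section GallaiPartition

variable {V W κ : Type*} {c : Sym2 V → κ}

/-- An edge coloring of a complete graph without rainbow triangles. Colorings are functions on
`Sym2 V`, so that symmetry is automatic; the colors of the loops carry no information. -/
def IsGallai (c : Sym2 V → κ) : Prop :=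
  ∀ ⦃x y z⦄, x ≠ y → x ≠ z → y ≠ z →
    c s(x, y) = c s(x, z) ∨ c s(x, y) = c s(y, z) ∨ c s(x, z) = c s(y, z)

/-- The graph formed by the edges of color `i`. -/
def colorGraph (c : Sym2 V → κ) (i : κ) : SimpleGraph V := fromEdgeSet (c ⁻¹' {i})

lemma colorGraph_adj {i : κ} {x y : V} : (colorGraph c i).Adj x y ↔ c s(x, y) = i ∧ x ≠ y := by
  simp [colorGraph]

lemma colorGraph_comp_map (c : Sym2 V → κ) {f : W → V} (hf : f.Injective) (i : κ) :
    colorGraph (c ∘ Sym2.map f) i = (colorGraph c i).comap f := by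
  ext x y
  simp [colorGraph_adj, hf.ne_iff]

lemma IsGallai.comp_map (hc : IsGallai c) {f : W → V} (hf : f.Injective) :
    IsGallai (c ∘ Sym2.map f) :=
  fun _ _ _ hxy hxz hyz ↦ hc (hf.ne hxy) (hf.ne hxz) (hf.ne hyz)

lemma IsGallai.eq_of_reachable (hc : IsGallai c) {a : κ} {x y v : V}
    (hxy : (colorGraph c a).Reachable x y) (hxv : ¬(colorGraph c a).Reachable x v) :
    c s(v, x) = c s(v, y) := by
  obtain ⟨p⟩ := hxy
  induction p with
  | nil => rfl
  | @cons x z y hxz p ih =>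
    have hzv : ¬(colorGraph c a).Reachable z v := fun h ↦ hxv (hxz.reachable.trans h)
    rw [← ih hzv]
    have hvx : v ≠ x := by rintro rfl; exact hxv .rfl
    have hvz : v ≠ z := by rintro rfl; exact hzv .rfl
    have hx : c s(v, x) ≠ a := fun h ↦ hxv (colorGraph_adj.2 ⟨h, hvx⟩).symm.reachable
    have hz : c s(v, z) ≠ a := fun h ↦ hzv (colorGraph_adj.2 ⟨h, hvz⟩).symm.reachable
    obtain ⟨hcol, hne⟩ := colorGraph_adj.1 hxz
    rcases hc hvx hvz hne with h | h | h
    exacts [h, absurd (h.trans hcol) hx, absurd (h.trans hcol) hz]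

lemma exists_adj_reachable_induce_compl {G : SimpleGraph V} {v w : V} (h : G.Reachable w v)
    (hwv : w ∈ ({v}ᶜ : Set V)) :
    ∃ y : ({v}ᶜ : Set V), G.Adj y v ∧ (G.induce {v}ᶜ).Reachable ⟨w, hwv⟩ y := by
  obtain ⟨p⟩ := h
  induction p with
  | nil => exact absurd rfl hwv
  | @cons w u v hwu p ih =>
    by_cases huv : u = v
    · exact ⟨⟨w, hwv⟩, huv ▸ hwu, .rfl⟩
    · obtain ⟨y, hyv, huy⟩ := ih huv
      exact ⟨y, hyv, (Adj.reachable (induce_adj.2 hwu)).trans huy⟩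

lemma IsGallai.eq_of_not_reachable_induce_compl (hc : IsGallai c) {e : κ} {v : V}
    (hcon : (colorGraph c e).Preconnected) {x w : ({v}ᶜ : Set V)} (hx : c s(v, x) ≠ e)
    (hwx : ¬((colorGraph c e).induce {v}ᶜ).Reachable w x) : c s(↑x, ↑w) = c s(v, ↑x) := by
  obtain ⟨y, hyv, hwy⟩ := exists_adj_reachable_induce_compl (hcon w v) w.2
  have hyx : ¬((colorGraph c e).induce {v}ᶜ).Reachable y x := fun h ↦ hwx (hwy.trans h)
  have hne : (x : V) ≠ y := fun h ↦ hyx (Subtype.ext h ▸ .rfl)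
  have hxy : c s(↑x, ↑y) ≠ e := fun h ↦
    hyx (Adj.reachable (induce_adj.2 (colorGraph_adj.2 ⟨h, hne⟩).symm))
  have hvy : c s(v, ↑y) = e := (colorGraph_adj.1 hyv.symm).1
  have hind : (colorGraph c e).induce {v}ᶜ = colorGraph (c ∘ Sym2.map Subtype.val) e :=
    (colorGraph_comp_map c Subtype.val_injective e).symm
  rw [hind] at hwy hwx
  have hmod : c s(↑x, ↑w) = c s(↑x, ↑y) :=
    (hc.comp_map Subtype.val_injective).eq_of_reachable hwy hwx
  rw [hmod]
  rcases hc (Ne.symm x.2) (Ne.symm y.2) hne with h | h | h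
  exacts [absurd (h.trans hvy) hx, h.symm, absurd (h.symm.trans hvy) hxy]

lemma IsGallai.eq_of_not_preconnected_induce_compl (hc : IsGallai c) {e : κ} {v : V}
    (hcon : (colorGraph c e).Preconnected) (hdis : ¬((colorGraph c e).induce {v}ᶜ).Preconnected)
    {x y : V} (hxv : x ≠ v) (hyv : y ≠ v) (hx : c s(v, x) ≠ e) (hy : c s(v, y) ≠ e) :
    c s(v, x) = c s(v, y) := by
  lift x to ({v}ᶜ : Set V) using hxv
  lift y to ({v}ᶜ : Set V) using hyv
  by_cases hxy : ((colorGraph c e).induce {v}ᶜ).Reachable x y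
  · obtain ⟨w, hwx⟩ : ∃ w, ¬((colorGraph c e).induce {v}ᶜ).Reachable w x := by
      by_contra! h
      exact hdis fun u w ↦ (h u).trans (h w).symm
    have hwy : ¬((colorGraph c e).induce {v}ᶜ).Reachable w y := fun h ↦ hwx (h.trans hxy.symm)
    have hmod : c s(↑w, ↑x) = c s(↑w, ↑y) := by
      refine (hc.comp_map Subtype.val_injective).eq_of_reachable (a := e) (x := x) (y := y)
        (v := w) ?_ ?_ <;>
      rw [colorGraph_comp_map c Subtype.val_injective]
      exacts [hxy, fun h ↦ hwx h.symm]
    rw [← hc.eq_of_not_reachable_induce_compl hcon hx hwx,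
      ← hc.eq_of_not_reachable_induce_compl hcon hy hwy, Sym2.eq_swap, hmod, Sym2.eq_swap]
  · rw [← hc.eq_of_not_reachable_induce_compl hcon hx fun h ↦ hxy h.symm,
      ← hc.eq_of_not_reachable_induce_compl hcon hy hxy, Sym2.eq_swap]

lemma IsGallai.exists_not_preconnected [Finite V] [Nontrivial V] (hc : IsGallai c)
    {col : Fin 3 → κ} (hcol : col.Injective) : ∃ i, ¬(colorGraph c (col i)).Preconnected := by
  induction h : Nat.card V using Nat.strong_induction_on generalizing V with | _ n ih
  by_contra! hcon
  obtain ⟨v⟩ := (inferInstance : Nonempty V)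
  choose x hx using fun i ↦ (hcon i).exists_adj_of_nontrivial v
  have hxv i : x i ≠ v := (hx i).ne'
  have hcx i : c s(v, x i) = col i := (colorGraph_adj.1 (hx i)).1
  have hnontriv : Nontrivial ({v}ᶜ : Set V) :=
    ⟨⟨x 0, hxv 0⟩, ⟨x 1, hxv 1⟩, fun h ↦ absurd (hcol ((hcx 0).symm.trans
      ((congrArg (fun y : ({v}ᶜ : Set V) ↦ c s(v, ↑y)) h).trans (hcx 1)))) (by decide)⟩
  have hcard : Nat.card ({v}ᶜ : Set V) < n := by
    rw [← h]
    exact Finite.card_subtype_lt (x := v) (by simp)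
  obtain ⟨i, hi⟩ := ih _ hcard (hc.comp_map Subtype.val_injective) rfl
  rw [colorGraph_comp_map c Subtype.val_injective] at hi
  have hdistinct : ∀ i : Fin 3, ∃ j l, j ≠ i ∧ l ≠ i ∧ j ≠ l := by decide
  obtain ⟨j, l, hj, hl, hjl⟩ := hdistinct i
  have := hc.eq_of_not_preconnected_induce_compl (hcon i) hi (hxv j) (hxv l)
    (hcx j ▸ hcol.ne hj) (hcx l ▸ hcol.ne hl)
  exact hjl (hcol ((hcx j).symm.trans (this.trans (hcx l))))

lemma IsGallai.exists_two_colors [Finite V] [Nontrivial V] (hc : IsGallai c)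
    (hcon : ∀ x y, x ≠ y → (colorGraph c (c s(x, y))).Preconnected) :
    ∃ a b, ∀ x y, x ≠ y → c s(x, y) = a ∨ c s(x, y) = b := by
  obtain ⟨x₀, y₀, h₀⟩ := exists_pair_ne V
  by_contra! hmany
  obtain ⟨x₁, y₁, h₁, h₁₀, -⟩ := hmany (c s(x₀, y₀)) (c s(x₀, y₀))
  obtain ⟨x₂, y₂, h₂, h₂₀, h₂₁⟩ := hmany (c s(x₀, y₀)) (c s(x₁, y₁))
  obtain ⟨i, hi⟩ := hc.exists_not_preconnected
    (col := ![c s(x₀, y₀), c s(x₁, y₁), c s(x₂, y₂)])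
    (by intro i j; fin_cases i <;> fin_cases j <;> simp_all [eq_comm])
  fin_cases i
  exacts [hi (hcon _ _ h₀), hi (hcon _ _ h₁), hi (hcon _ _ h₂)]

lemma IsGallai.eq_of_reachable_of_reachable (hc : IsGallai c) {a : κ} {x x' y y' : V}
    (hx : (colorGraph c a).Reachable x x') (hy : (colorGraph c a).Reachable y y')
    (hxy : ¬(colorGraph c a).Reachable x y) : c s(x, y) = c s(x', y') := by
  rw [Sym2.eq_swap, hc.eq_of_reachable hx hxy, Sym2.eq_swap,
    hc.eq_of_reachable hy fun h ↦ hxy (hx.trans h.symm)]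

/-- The classes of `r` form a Gallai partition with the colors `a` and `b`: between any two of them
all edges have the same color, which is `a` or `b`. -/
def IsGallaiSetoid (c : Sym2 V → κ) (r : Setoid V) (a b : κ) : Prop :=
  ∀ x y, ¬r x y →
    (c s(x, y) = a ∨ c s(x, y) = b) ∧ ∀ x' y', r x x' → r y y' → c s(x', y') = c s(x, y)

lemma IsGallai.isGallaiSetoid_comap (hc : IsGallai c) {e a b : κ}
    {r : Setoid (colorGraph c e).ConnectedComponent}
    (hr : IsGallaiSetoid (c ∘ Sym2.map Quot.out) r a b) :
    IsGallaiSetoid c (r.comap (colorGraph c e).connectedComponentMk) a b := by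
  set π := (colorGraph c e).connectedComponentMk
  have hout (x : V) : (colorGraph c e).Reachable x (Quot.out (π x)) :=
    ConnectedComponent.exact (Quot.out_eq (π x)).symm
  have hcol : ∀ x y, ¬r (π x) (π y) → c s(x, y) = c s(Quot.out (π x), Quot.out (π y)) :=
    fun x y hxy ↦ hc.eq_of_reachable_of_reachable (hout x) (hout y) fun hreach ↦
      hxy ((show π x = π y from ConnectedComponent.sound hreach) ▸ r.refl (π x))
  intro x y hxy
  obtain ⟨htwo, hhom⟩ := hr _ _ hxy
  refine ⟨hcol x y hxy ▸ htwo, fun x' y' hx hy ↦ ?_⟩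
  have hxy' : ¬r (π x') (π y') := fun h ↦ hxy (r.trans hx (r.trans h (r.symm hy)))
  exact (hcol x' y' hxy').trans ((hhom _ _ hx hy).trans (hcol x y hxy).symm)

theorem IsGallai.exists_isGallaiSetoid [Finite V] [Nontrivial V] (hc : IsGallai c) :
    ∃ r ≠ ⊤, ∃ a b, IsGallaiSetoid c r a b := by
  induction h : Nat.card V using Nat.strong_induction_on generalizing V with | _ n ih
  -- If every color that occurs is connected there are at most two colors; otherwise the components
  -- of a disconnected color are contracted.
  by_cases hcon : ∀ x y, x ≠ y → (colorGraph c (c s(x, y))).Preconnected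
  · obtain ⟨a, b, hab⟩ := hc.exists_two_colors hcon
    obtain ⟨x, y, hxy⟩ := exists_pair_ne V
    refine ⟨⊥, fun htop ↦ hxy (Setoid.eq_top_iff.1 htop x y), a, b, fun x y hxy ↦ ⟨hab x y hxy, ?_⟩⟩
    rintro _ _ rfl rfl
    rfl
  push Not at hcon
  obtain ⟨u, v, huv, hdis⟩ := hcon
  set G := colorGraph c (c s(u, v))
  have hsurj : Function.Surjective G.connectedComponentMk := Quot.mk_surjective
  have hcard : Nat.card G.ConnectedComponent < n := by
    cases nonempty_fintype V
    rw [← h, Nat.card_eq_fintype_card, Nat.card_eq_fintype_card]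
    exact Fintype.card_lt_of_surjective_not_injective _ hsurj fun hinj ↦
      huv (hinj (ConnectedComponent.sound (Adj.reachable (colorGraph_adj.2 ⟨rfl, huv⟩))))
  have hnontriv : Nontrivial G.ConnectedComponent := by
    by_contra hsub
    rw [not_nontrivial_iff_subsingleton] at hsub
    exact hdis fun x y ↦ ConnectedComponent.exact (Subsingleton.elim _ _)
  have hout : Function.Injective (Quot.out : G.ConnectedComponent → V) :=
    Function.LeftInverse.injective Quot.out_eq
  obtain ⟨r, hr, a, b, hab⟩ := ih (V := G.ConnectedComponent) _ hcard (hc.comp_map hout) rfl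
  refine ⟨r.comap G.connectedComponentMk, fun htop ↦ hr ?_, a, b, hc.isGallaiSetoid_comap hab⟩
  rw [Setoid.eq_top_iff] at htop ⊢
  exact hsurj.forall₂.2 htop

end GallaiPartition

/-! ### Near-cliques -/

section NearClique

variable {V : Type*} {G : SimpleGraph V} {n k : ℕ} {S K A U W : Finset V}

/-- `G` contains a copy of `K_{n+2}` minus an edge inside `U`: an `n`-clique together with two
further vertices joined to all of it. For `n = 1, 2, 3` these are `P₃`, `K₄` minus an edge, and
`K₅` minus an edge. -/
def HasNearClique (G : SimpleGraph V) (n : ℕ) (U : Finset V) : Prop :=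
  ∃ S ⊆ U, G.IsNClique n S ∧ ∃ u ∈ U, ∃ v ∈ U, u ≠ v ∧ ∀ x ∈ S, G.Adj x u ∧ G.Adj x v

lemma HasNearClique.mono (h : HasNearClique G n U) (hUW : U ⊆ W) : HasNearClique G n W := by
  obtain ⟨S, hS, hclique, u, hu, v, hv, huv⟩ := h
  exact ⟨S, hS.trans hUW, hclique, u, hUW hu, v, hUW hv, huv⟩

lemma HasNearClique.of_isCompleteBetween (h : HasNearClique G n A) (hAU : A ⊆ U)
    (hK : G.IsNClique k K) (hKU : K ⊆ U) (hKA : G.IsCompleteBetween K A) :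
    HasNearClique G (n + k) U := by
  obtain ⟨S, hS, hclique, u, hu, v, hv, huv, hadj⟩ := h
  have hSK : Disjoint S K :=
    Finset.disjoint_left.2 fun x hx hxK ↦ (hKA hxK (hS hx)).ne rfl
  refine ⟨S ∪ K, Finset.union_subset (hS.trans hAU) hKU, ⟨?_, ?_⟩,
    u, hAU hu, v, hAU hv, huv, ?_⟩
  · rw [Finset.coe_union, isClique_iff, Set.pairwise_union]
    exact ⟨hclique.isClique, hK.isClique, fun x hx y hy _ ↦ ⟨(hKA hy (hS hx)).symm, hKA hy (hS hx)⟩⟩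
  · rw [Finset.card_union_of_disjoint hSK, hclique.card_eq, hK.card_eq]
  · intro x hx
    rcases Finset.mem_union.1 hx with hx | hx
    exacts [hadj x hx, ⟨hKA hx hu, hKA hx hv⟩]

lemma HasNearClique.of_adj {x : V} (h : HasNearClique G n A) (hx : x ∈ U)
    (hA : ∀ y ∈ A, y ∈ U ∧ G.Adj x y) : HasNearClique G (n + 1) U :=
  h.of_isCompleteBetween (fun y hy ↦ (hA y hy).1) (isNClique_one.2 ⟨x, rfl⟩) (by simpa)
    fun x' hx' y hy ↦ (by simpa using hx' : x' = x) ▸ (hA y hy).2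

lemma HasNearClique.of_twin {x y : V} (hS : G.IsNClique (n + 1) S) (hSU : S ⊆ U) (hx : x ∈ S)
    (hyS : y ∉ S) (hyU : y ∈ U) (hxy : ∀ z ∈ S, z ≠ x → G.Adj z y) : HasNearClique G n U := by
  refine ⟨S.erase x, (S.erase_subset x).trans hSU, hS.erase_of_mem hx, x, hSU hx, y, hyU,
    fun h ↦ hyS (h ▸ hx), fun z hz ↦ ?_⟩
  obtain ⟨hzx, hzS⟩ := Finset.mem_erase.1 hz
  exact ⟨hS.isClique hzS hx hzx, hxy z hzS hzx⟩

lemma HasNearClique.of_isNClique (hS : G.IsNClique (n + 2) S) (hSU : S ⊆ U) :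
    HasNearClique G n U := by
  obtain ⟨x, hx, y, hy, hxy⟩ := Finset.one_lt_card.1 (hS.card_eq ▸ by lia : 1 < #S)
  exact .of_twin (hS.erase_of_mem hy) ((S.erase_subset y).trans hSU) (Finset.mem_erase.2 ⟨hxy, hx⟩)
    (S.notMem_erase y) (hSU hy)
    fun z hz _ ↦ hS.isClique (Finset.mem_of_mem_erase hz) hy (Finset.ne_of_mem_erase hz)

lemma HasNearClique.exists_adj (h : HasNearClique G (n + 1) U) : ∃ x ∈ U, ∃ y ∈ U, G.Adj x y := by
  obtain ⟨S, hS, hclique, u, hu, v, -, -, hadj⟩ := h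
  obtain ⟨x, hx⟩ := Finset.card_pos.1 (hclique.card_eq ▸ n.succ_pos : 0 < #S)
  exact ⟨x, hS hx, u, hu, (hadj x hx).1⟩

end NearClique

/-! ### Small Ramsey numbers -/

section Ramsey

variable {V : Type*} {m n p q N : ℕ}

/-- Every set of more than `N` vertices of `V` on which two graphs cover all pairs contains an
`m`-clique of the first or an `n`-clique of the second, i.e. `R(m, n) ≤ N + 1` inside `V`. -/
def RamseyAtMost (V : Type*) (m n N : ℕ) : Prop :=
  ∀ (R B : SimpleGraph V) (T : Finset V), (R ⊔ B).IsClique T → R.CliqueFreeOn T m →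
    B.CliqueFreeOn T n → #T ≤ N

lemma RamseyAtMost.symm (h : RamseyAtMost V m n N) : RamseyAtMost V n m N :=
  fun R B T hT hR hB ↦ h B R T (sup_comm R B ▸ hT) hB hR

lemma ramseyAtMost_two (n : ℕ) : RamseyAtMost V 2 (n + 1) n := by
  intro R B T hT hR hB
  by_contra! hcard
  obtain ⟨S, hST, hS⟩ := Finset.exists_subset_card_eq hcard
  refine hB (t := S) (by exact_mod_cast hST) ⟨fun x hx y hy hxy ↦ ?_, hS⟩
  exact (hT (hST hx) (hST hy) hxy).resolve_left
    ((cliqueFreeOn_two _).1 hR (hST hx) (hST hy) hxy)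

lemma RamseyAtMost.card_filter_adj_le (hp : RamseyAtMost V m n p) {R B : SimpleGraph V}
    {T : Finset V} (hT : (R ⊔ B).IsClique T) (hR : R.CliqueFreeOn T (m + 1))
    (hB : B.CliqueFreeOn T n) {x : V} (hx : x ∈ T) : #{y ∈ T | R.Adj x y} ≤ p := by
  have hsub : (↑{y ∈ T | R.Adj x y} : Set V) ⊆ T := by
    exact_mod_cast Finset.filter_subset (R.Adj x) T
  have hfree := CliqueFreeOn.of_succ R hR hx
  refine hp R B _ (hT.subset hsub) (hfree.subset _ ?_) (hB.subset _ hsub)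
  exact fun y hy ↦ Finset.mem_filter.1 hy

lemma card_le_card_filter_adj_add {R B : SimpleGraph V} {T : Finset V}
    (hT : (R ⊔ B).IsClique T) {x : V} (hx : x ∈ T) :
    #T ≤ #{y ∈ T | R.Adj x y} + #{y ∈ T | B.Adj x y} + 1 := by
  rw [← Finset.card_erase_add_one hx]
  gcongr
  refine le_trans (Finset.card_le_card fun y hy ↦ ?_) (Finset.card_union_le _ _)
  obtain ⟨hyx, hyT⟩ := Finset.mem_erase.1 hy
  rw [← Finset.filter_or, Finset.mem_filter]
  exact ⟨hyT, hT hx hyT hyx.symm⟩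

lemma RamseyAtMost.step (hp : RamseyAtMost V m (n + 1) p) (hq : RamseyAtMost V (m + 1) n q) :
    RamseyAtMost V (m + 1) (n + 1) (p + q + 1) := by
  intro R B T hT hR hB
  obtain rfl | ⟨x, hx⟩ := T.eq_empty_or_nonempty
  · simp
  have hred := hp.card_filter_adj_le hT hR hB hx
  have hblue := hq.symm.card_filter_adj_le (sup_comm R B ▸ hT) hB hR hx
  have := card_le_card_filter_adj_add hT hx
  lia

lemma even_card_of_odd_card_filter_adj {G : SimpleGraph V} {T : Finset V}
    (h : ∀ x ∈ T, Odd #{y ∈ T | G.Adj x y}) : Even #T := by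
  have hdeg (x : T) : (G.induce T).degree x = #{y ∈ T | G.Adj x y} := by
    rw [← card_neighborFinset_eq_degree, ← Finset.card_map (Function.Embedding.subtype _)]
    congr 1
    ext y
    simp [and_comm]
  have := (G.induce (T : Set V)).even_card_odd_degree_vertices
  rwa [Finset.filter_true_of_mem fun x _ ↦ by rw [hdeg]; exact h x x.2, Finset.card_univ,
    ← Nat.card_eq_fintype_card, Nat.card_coe_set_eq, Set.ncard_coe_finset] at this

/-- A set of the extremal size `p + q + 1` would induce a `p`-regular graph of odd order and odd
degree. -/
lemma RamseyAtMost.step_of_odd (hp : RamseyAtMost V m (n + 1) p)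
    (hq : RamseyAtMost V (m + 1) n q) (hp_odd : Odd p) (hq_odd : Odd q) :
    RamseyAtMost V (m + 1) (n + 1) (p + q) := by
  intro R B T hT hR hB
  refine Nat.le_of_lt_succ ((hp.step hq R B T hT hR hB).lt_of_ne fun hcard ↦ ?_)
  have heven : Even #T := even_card_of_odd_card_filter_adj (G := R) fun x hx ↦ by
    have hred := hp.card_filter_adj_le hT hR hB hx
    have hblue := hq.symm.card_filter_adj_le (sup_comm R B ▸ hT) hB hR hx
    have := card_le_card_filter_adj_add hT hx
    rwa [show #{y ∈ T | R.Adj x y} = p by lia]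
  rw [hcard] at heven
  exact Nat.not_even_iff_odd.2 (hp_odd.add_odd hq_odd).add_one heven

lemma ramseyAtMost_three_three : RamseyAtMost V 3 3 5 :=
  (ramseyAtMost_two 2).step (ramseyAtMost_two 2).symm

lemma ramseyAtMost_three_four : RamseyAtMost V 3 4 8 :=
  (ramseyAtMost_two 3).step_of_odd ramseyAtMost_three_three (by decide) (by decide)

lemma ramseyAtMost_four_four : RamseyAtMost V 4 4 17 :=
  ramseyAtMost_three_four.step ramseyAtMost_three_four.symm

end Ramsey

/-! ### Two colors and a matching of twins -/

section Twins

variable {V : Type*} {G R B : SimpleGraph V} {m n N : ℕ} {S W W' : Finset V} {x : V}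

/-- The pairs of vertices of `W` that are not adjacent in `G` form a matching. -/
def IsCoMatchingOn (G : SimpleGraph V) (W : Finset V) : Prop :=
  ∀ x ∈ W, ∀ y ∈ W, ∀ z ∈ W, y ≠ x → z ≠ x → ¬G.Adj x y → ¬G.Adj x z → y = z

lemma IsCoMatchingOn.exists_isClique (h : IsCoMatchingOn G W) :
    ∃ T ⊆ W, G.IsClique T ∧ #W ≤ 2 * #T := by
  obtain ⟨T, hT, hmax⟩ :=
    (W.powerset.filter fun T : Finset V ↦ G.IsClique (T : Set V)).exists_max_image Finset.card
      ⟨∅, by simp⟩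
  simp only [Finset.mem_filter, Finset.mem_powerset] at hT hmax
  obtain ⟨hTW, hclique⟩ := hT
  have hpartner : ∀ w ∈ W \ T, ∃ t ∈ T, t ≠ w ∧ ¬G.Adj t w := by
    intro w hw
    obtain ⟨hwW, hwT⟩ := Finset.mem_sdiff.1 hw
    by_contra! hadj
    have hinsert := hmax (insert w T) ⟨Finset.insert_subset hwW hTW, by
      rw [Finset.coe_insert]
      exact hclique.insert fun t ht hwt ↦ (hadj t ht hwt.symm).symm⟩
    rw [Finset.card_insert_of_notMem hwT] at hinsert
    lia
  choose! f hfT hne hnadj using hpartner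
  have hinj : Set.InjOn f (W \ T : Finset V) := fun w hw w' hw' heq ↦
    h (f w) (hTW (hfT w hw)) w (Finset.sdiff_subset hw) w' (Finset.sdiff_subset hw')
      (hne w hw).symm (heq ▸ (hne w' hw').symm) (hnadj w hw) (heq ▸ hnadj w' hw')
  have hcard := Finset.card_le_card_of_injOn f hfT hinj
  have := Finset.card_sdiff_add_card_eq_card hTW
  exact ⟨T, hTW, hclique, by lia⟩

lemma IsCoMatchingOn.hasNearClique (h : IsCoMatchingOn G W) (hW : 2 * n + 3 ≤ #W) :
    HasNearClique G (n + 1) W := by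
  obtain ⟨T, hTW, hclique, hcard⟩ := h.exists_isClique
  by_cases hT : n + 3 ≤ #T
  · obtain ⟨S, hST, hS⟩ := Finset.exists_subset_card_eq hT
    exact .of_isNClique ⟨hclique.subset (by exact_mod_cast hST), hS⟩ (hST.trans hTW)
  have hTn : G.IsNClique (n + 2) T := ⟨hclique, by lia⟩
  obtain ⟨w, hwW, hwT⟩ := Finset.exists_mem_notMem_of_card_lt_card (by lia : #T < #W)
  obtain ⟨t, ht, hadj⟩ : ∃ t ∈ T, ∀ z ∈ T, z ≠ t → G.Adj z w := by
    by_cases hex : ∃ t ∈ T, ¬G.Adj t w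
    · obtain ⟨t, ht, htw⟩ := hex
      refine ⟨t, ht, fun z hz hzt ↦ by_contra fun hzw ↦ hzt ?_⟩
      exact h w hwW z (hTW hz) t (hTW ht) (fun h ↦ hwT (h ▸ hz)) (fun h ↦ hwT (h ▸ ht))
        (fun h ↦ hzw h.symm) (fun h ↦ htw h.symm)
    · push Not at hex
      obtain ⟨t, ht⟩ := Finset.card_pos.1 (by lia : 0 < #T)
      exact ⟨t, ht, fun z hz _ ↦ hex z hz⟩
  exact .of_twin hTn hTW ht hwT hwW hadj

/-- Any two vertices of `W` that are joined neither by `R` nor by `B` are twins: every other vertex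
is joined to both of them by `R`, or to both of them by `B`. -/
def HasTwinPairs (R B : SimpleGraph V) (W : Finset V) : Prop :=
  ∀ x ∈ W, ∀ y ∈ W, x ≠ y → ¬(R ⊔ B).Adj x y → ∀ z ∈ W, z ≠ x → z ≠ y →
    (R ⊔ B).Adj x z ∧ (R.Adj x z ↔ R.Adj y z) ∧ (B.Adj x z ↔ B.Adj y z)

lemma HasTwinPairs.subset (h : HasTwinPairs R B W) (hW : W' ⊆ W) : HasTwinPairs R B W' :=
  fun x hx y hy hxy hadj z hz ↦ h x (hW hx) y (hW hy) hxy hadj z (hW hz)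

lemma HasTwinPairs.symm (h : HasTwinPairs R B W) : HasTwinPairs B R W := by
  intro x hx y hy hxy hadj z hz hzx hzy
  rw [sup_comm] at hadj ⊢
  exact ⟨(h x hx y hy hxy hadj z hz hzx hzy).1, (h x hx y hy hxy hadj z hz hzx hzy).2.symm⟩

lemma HasTwinPairs.isCoMatchingOn_sup (h : HasTwinPairs R B W) : IsCoMatchingOn (R ⊔ B) W :=
  fun x hx y hy z hz hyx hzx hxy hxz ↦
    by_contra fun hyz ↦ hxz (h x hx y hy hyx.symm hxy z hz hzx (Ne.symm hyz)).1

lemma eq_of_adj_of_not_hasNearClique_one (hR : ¬HasNearClique R 1 W) {y z : V} (hx : x ∈ W)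
    (hy : y ∈ W) (hz : z ∈ W) (hxy : R.Adj x y) (hxz : R.Adj x z) : y = z :=
  by_contra fun hyz ↦ hR
    ⟨{x}, by simpa, isNClique_one.2 ⟨x, rfl⟩, y, hy, z, hz, hyz, by simp [hxy, hxz]⟩

lemma HasTwinPairs.isCoMatchingOn (h : HasTwinPairs R B W) (hR : ¬HasNearClique R 1 W) :
    IsCoMatchingOn B W := by
  have hRB : ∀ x ∈ W, ∀ y ∈ W, ∀ z ∈ W, y ≠ x → z ≠ x → R.Adj x y → ¬B.Adj x z → y = z := by
    intro x hx y hy z hz hyx hzx hxy hxz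
    by_cases hRxz : R.Adj x z
    · exact eq_of_adj_of_not_hasNearClique_one hR hx hy hz hxy hRxz
    by_contra hyz
    have hzy := (h x hx z hz hzx.symm (not_or.2 ⟨hRxz, hxz⟩) y hy hyx hyz).2.1.1 hxy
    exact hzx (eq_of_adj_of_not_hasNearClique_one hR hy hz hx hzy.symm hxy.symm)
  intro x hx y hy z hz hyx hzx hxy hxz
  by_cases hRxy : R.Adj x y
  · exact hRB x hx y hy z hz hyx hzx hRxy hxz
  by_cases hRxz : R.Adj x z
  · exact (hRB x hx z hz y hy hzx hyx hRxz hxy).symm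
  · exact h.isCoMatchingOn_sup x hx y hy z hz hyx hzx (not_or.2 ⟨hRxy, hxy⟩)
      (not_or.2 ⟨hRxz, hxz⟩)

/-- The vertex `x` is adjacent to every other vertex of `W`; compare `SimpleGraph.IsUniversal`. -/
def IsUniversalOn (G : SimpleGraph V) (W : Finset V) (x : V) : Prop :=
  ∀ y ∈ W, x ≠ y → G.Adj x y

lemma IsUniversalOn.subset (h : IsUniversalOn G W x) (hW : W' ⊆ W) : IsUniversalOn G W' x :=
  fun y hy ↦ h y (hW hy)

lemma HasTwinPairs.isUniversalOn_of_isNClique (h : HasTwinPairs R B W)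
    (hR : ¬HasNearClique R n W) (hS : R.IsNClique (n + 1) S) (hSW : S ⊆ W) (hx : x ∈ S) :
    IsUniversalOn (R ⊔ B) W x := by
  intro y hy hxy
  by_contra hadj
  have hyS : y ∉ S := fun hyS ↦ hadj (Or.inl (hS.isClique hx hyS hxy))
  refine hR (.of_twin hS hSW hx hyS hy fun z hz hzx ↦ ?_)
  have htwin := h x (hSW hx) y hy hxy hadj z (hSW hz) hzx fun h ↦ hyS (h ▸ hz)
  exact (htwin.2.1.1 (hS.isClique hx hz hzx.symm)).symm

/-- Choose one vertex from each twin pair and add `S`: a monochromatic clique of critical size in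
the resulting two-colored set would have to lie inside `S`. -/
lemma HasTwinPairs.card_add_two_mul_card_le (h : HasTwinPairs R B W)
    (hR : ¬HasNearClique R m W) (hB : ¬HasNearClique B n W) (hN : RamseyAtMost V (m + 1) (n + 1) N)
    (hSW : S ⊆ W) (hS : ∀ x ∈ S, IsUniversalOn (R ⊔ B) W x) (hSm : #S ≤ m) (hSn : #S ≤ n) :
    #{x ∈ W | ¬IsUniversalOn (R ⊔ B) W x} + 2 * #S ≤ 2 * N := by
  have hDW : {x ∈ W | ¬IsUniversalOn (R ⊔ B) W x} ⊆ W := Finset.filter_subset _ _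
  obtain ⟨T, hTD, hTclique, hTcard⟩ := (h.subset hDW).isCoMatchingOn_sup.exists_isClique
  have hTW := hTD.trans hDW
  have hTS : ∀ x ∈ S ∪ T, IsUniversalOn (R ⊔ B) W x → x ∈ S := fun x hx hux ↦
    (Finset.mem_union.1 hx).resolve_right fun hxT ↦ (Finset.mem_filter.1 (hTD hxT)).2 hux
  have hdisj : Disjoint S T :=
    Finset.disjoint_left.2 fun x hxS hxT ↦ (Finset.mem_filter.1 (hTD hxT)).2 (hS x hxS)
  have hclique : (R ⊔ B).IsClique (S ∪ T : Finset V) := by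
    rw [Finset.coe_union, isClique_iff, Set.pairwise_union]
    exact ⟨fun x hx y hy ↦ hS x hx y (hSW hy), hTclique, fun x hx y hy hxy ↦
      ⟨hS x hx y (hTW hy) hxy, (hS x hx y (hTW hy) hxy).symm⟩⟩
  have hSTW : S ∪ T ⊆ W := Finset.union_subset hSW hTW
  have hQcard : ∀ Q ⊆ S ∪ T, (∀ x ∈ Q, IsUniversalOn (R ⊔ B) W x) → #Q ≤ #S := fun Q hQ hu ↦
    Finset.card_le_card fun x hx ↦ hTS x (hQ hx) (hu x hx)
  have hcard := hN R B _ hclique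
    (fun Q hQ hQm ↦ absurd (hQcard Q (by exact_mod_cast hQ) fun x hx ↦
      h.isUniversalOn_of_isNClique hR hQm ((by exact_mod_cast hQ : Q ⊆ _).trans hSTW) hx)
      (by rw [hQm.card_eq]; lia))
    (fun Q hQ hQn ↦ absurd (hQcard Q (by exact_mod_cast hQ) fun x hx ↦ sup_comm R B ▸
      h.symm.isUniversalOn_of_isNClique hB hQn ((by exact_mod_cast hQ : Q ⊆ _).trans hSTW) hx)
      (by rw [hQn.card_eq]; lia))
  rw [Finset.card_union_of_disjoint hdisj] at hcard
  lia

lemma HasTwinPairs.card_le_of_forall_not_isUniversalOn (h : HasTwinPairs R B W)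
    (hR : ¬HasNearClique R m W) (hB : ¬HasNearClique B n W) (hN : RamseyAtMost V (m + 1) (n + 1) N)
    (hW : ∀ x ∈ W, ¬IsUniversalOn (R ⊔ B) W x) : #W ≤ 2 * N := by
  have := h.card_add_two_mul_card_le hR hB hN (Finset.empty_subset W) (by simp) (by simp) (by simp)
  rwa [Finset.filter_true_of_mem hW] at this

lemma IsUniversalOn.card_le (h : IsUniversalOn (R ⊔ B) W x) :
    #W ≤ #{y ∈ W | R.Adj x y} + #{y ∈ W | B.Adj x y} + 1 := by
  refine (Finset.card_le_card fun y hy ↦ ?_).trans ((Finset.card_insert_le x _).trans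
    (Nat.succ_le_succ (Finset.card_union_le _ _)))
  rw [← Finset.filter_or, Finset.mem_insert, Finset.mem_filter]
  exact or_iff_not_imp_left.2 fun hyx ↦ ⟨hy, h y hy (Ne.symm hyx)⟩

lemma not_hasNearClique_filter_adj (hG : ¬HasNearClique G (n + 1) W) (hx : x ∈ W) :
    ¬HasNearClique G n {y ∈ W | G.Adj x y} :=
  fun h ↦ hG (h.of_adj hx fun _ ↦ Finset.mem_filter.1)

lemma HasTwinPairs.card_filter_adj_le (h : HasTwinPairs R B W) (hR : ¬HasNearClique R 2 W)
    (hB : ¬HasNearClique B (n + 1) W) (hx : x ∈ W) : #{y ∈ W | R.Adj x y} ≤ 2 * n + 2 := by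
  have hsub : {y ∈ W | R.Adj x y} ⊆ W := Finset.filter_subset _ _
  by_contra! hcard
  exact hB ((((h.subset hsub).isCoMatchingOn
    (not_hasNearClique_filter_adj hR hx)).hasNearClique hcard).mono hsub)

lemma HasTwinPairs.card_le_nine (h : HasTwinPairs R B W) (hR : ¬HasNearClique R 2 W)
    (hB : ¬HasNearClique B 2 W) (hx : x ∈ W) (hu : IsUniversalOn (R ⊔ B) W x) : #W ≤ 9 := by
  have := hu.card_le
  have := h.card_filter_adj_le hR hB hx
  have := h.symm.card_filter_adj_le hB hR hx
  lia

lemma HasTwinPairs.card_le_ten (h : HasTwinPairs R B W) (hR : ¬HasNearClique R 2 W)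
    (hB : ¬HasNearClique B 2 W) : #W ≤ 10 := by
  by_cases hW : ∃ x ∈ W, IsUniversalOn (R ⊔ B) W x
  · obtain ⟨x, hx, hu⟩ := hW
    exact (h.card_le_nine hR hB hx hu).trans (by norm_num)
  · exact h.card_le_of_forall_not_isUniversalOn hR hB ramseyAtMost_three_three (by simpa using hW)

lemma HasTwinPairs.card_le_sixteen (h : HasTwinPairs R B W) (hR : ¬HasNearClique R 2 W)
    (hB : ¬HasNearClique B 3 W) : #W ≤ 16 := by
  by_contra! hW
  set D := {x ∈ W | IsUniversalOn (R ⊔ B) W x}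
  have hDW : D ⊆ W := Finset.filter_subset _ _
  have hD : R.IsClique D := by
    intro x hx y hy hxy
    obtain ⟨hxW, hux⟩ := Finset.mem_filter.1 hx
    obtain ⟨hyW, huy⟩ := Finset.mem_filter.1 hy
    refine (hux y hyW hxy).resolve_right fun hBxy ↦ ?_
    have hsub : {z ∈ W | B.Adj x z} ⊆ W := Finset.filter_subset _ _
    have hblue := (h.subset hsub).card_le_nine (fun h ↦ hR (h.mono hsub))
      (not_hasNearClique_filter_adj hB hxW) (Finset.mem_filter.2 ⟨hyW, hBxy⟩) (huy.subset hsub)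
    have hred := h.card_filter_adj_le hR hB hxW
    have := hux.card_le
    lia
  have hD3 : #D ≤ 3 := by
    by_contra! hcard
    obtain ⟨S, hSD, hS⟩ := Finset.exists_subset_card_eq hcard
    exact hR (.of_isNClique ⟨hD.subset (by exact_mod_cast hSD), hS⟩ (hSD.trans hDW))
  obtain ⟨S, hSD, hS⟩ := Finset.exists_subset_card_eq (min_le_left #D 2)
  have hcard := h.card_add_two_mul_card_le hR hB ramseyAtMost_three_four (hSD.trans hDW)
    (fun x hx ↦ (Finset.mem_filter.1 (hSD hx)).2) (by lia) (by lia)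
  have : #D + _ = #W := Finset.card_filter_add_card_filter_not _
  lia

lemma HasTwinPairs.card_le_thirtyFour (h : HasTwinPairs R B W) (hR : ¬HasNearClique R 3 W)
    (hB : ¬HasNearClique B 3 W) : #W ≤ 34 := by
  by_cases hW : ∃ x ∈ W, IsUniversalOn (R ⊔ B) W x
  · obtain ⟨x, hx, hu⟩ := hW
    have hRsub : {y ∈ W | R.Adj x y} ⊆ W := Finset.filter_subset _ _
    have hBsub : {y ∈ W | B.Adj x y} ⊆ W := Finset.filter_subset _ _
    have := hu.card_le
    have := (h.subset hRsub).card_le_sixteen (not_hasNearClique_filter_adj hR hx)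
      fun h ↦ hB (h.mono hRsub)
    have := (h.subset hBsub).symm.card_le_sixteen (not_hasNearClique_filter_adj hB hx)
      fun h ↦ hR (h.mono hBsub)
    lia
  · exact h.card_le_of_forall_not_isUniversalOn hR hB ramseyAtMost_four_four (by simpa using hW)

end Twins

/-! ### Gallai partitions of finite sets -/

section FinsetPartition

variable {V κ : Type*} {R B : SimpleGraph V} {U W X Y : Finset V} {P : Finpartition U}

/-- A partition of `U` into at least two parts, any two of which are joined completely by `R` or
completely by `B`. -/
structure IsGallaiPartition (R B : SimpleGraph V) (P : Finpartition U) : Prop where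
  nontrivial : P.parts.Nontrivial
  pairwise : (P.parts : Set (Finset V)).Pairwise fun X Y ↦
    R.IsCompleteBetween X Y ∨ B.IsCompleteBetween X Y

/-- The set `U` is the disjoint union of two nonempty sets that are completely joined in `G`. -/
def IsSplit (G : SimpleGraph V) (U : Finset V) : Prop :=
  ∃ A ⊆ U, A.Nonempty ∧ (U \ A).Nonempty ∧ G.IsCompleteBetween A (U \ A : Finset V)

theorem IsGallai.exists_isGallaiPartition {c : Sym2 V → κ} (hc : IsGallai c) (hU : U.Nontrivial) :
    ∃ a b, ∃ P : Finpartition U, IsGallaiPartition (colorGraph c a) (colorGraph c b) P := by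
  have : Nontrivial U := Set.nontrivial_coe_sort.2 hU
  obtain ⟨r, hr, a, b, hab⟩ :=
    (hc.comp_map (Subtype.val_injective (p := (· ∈ U)))).exists_isGallaiSetoid
  obtain ⟨ρ, hρ⟩ := (Subtype.val_injective (p := (· ∈ U))).hasLeftInverse
  set P := Finpartition.ofSetSetoid (r.comap ρ) U
  have hpart (x y : U) : (y : V) ∈ P.part x ↔ r x y := by
    rw [Finpartition.mem_part_ofSetSetoid_iff_rel, Setoid.comap_rel, hρ x, hρ y]
    simp
  refine ⟨a, b, P, ?_, ?_⟩
  · by_contra hsub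
    replace hsub : (P.parts : Set (Finset V)).Subsingleton := Set.not_nontrivial_iff.1 hsub
    refine hr (Setoid.eq_top_iff.2 fun x y ↦ (hpart x y).1 ?_)
    rw [hsub (P.part_mem.2 x.2) (P.part_mem.2 y.2)]
    exact P.mem_part_self.2 y.2
  intro X hX Y hY hXY
  have hnr {x y : U} (hx : ↑x ∈ X) (hy : ↑y ∈ Y) : ¬r x y := fun h ↦ hXY <|
    P.eq_of_mem_parts hX hY (P.part_eq_of_mem hX hx ▸ (hpart x y).2 h) hy
  obtain ⟨x, hx⟩ := P.nonempty_of_mem_parts hX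
  obtain ⟨y, hy⟩ := P.nonempty_of_mem_parts hY
  lift x to U using P.le hX hx
  lift y to U using P.le hY hy
  have hcol : ∀ x' ∈ X, ∀ y' ∈ Y, c s(x', y') = c s(↑x, ↑y) := by
    intro x' hx' y' hy'
    lift x' to U using P.le hX hx'
    lift y' to U using P.le hY hy'
    refine (hab x y (hnr hx hy)).2 x' y' ((hpart _ _).1 ?_) ((hpart _ _).1 ?_)
    exacts [(P.part_eq_of_mem hX hx).symm ▸ hx', (P.part_eq_of_mem hY hy).symm ▸ hy']
  have hne : ∀ x' ∈ X, ∀ y' ∈ Y, x' ≠ y' := fun _ hx' _ hy' h ↦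
    hXY (P.eq_of_mem_parts hX hY hx' (h ▸ hy'))
  refine (hab x y (hnr hx hy)).1.imp ?_ ?_ <;> intro h x' hx' y' hy' <;>
    exact colorGraph_adj.2 ⟨(hcol x' hx' y' hy').trans h, hne x' hx' y' hy'⟩

namespace IsGallaiPartition

lemma symm (hP : IsGallaiPartition R B P) : IsGallaiPartition B R P :=
  ⟨hP.nontrivial, hP.pairwise.mono' fun _ _ ↦ Or.symm⟩

lemma adj_of_adj (hP : IsGallaiPartition R B P) (hRB : Disjoint R B) (hX : X ∈ P.parts)
    (hY : Y ∈ P.parts) (hXY : X ≠ Y) {x x' y y' : V} (hx : x ∈ X) (hx' : x' ∈ X) (hy : y ∈ Y)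
    (hy' : y' ∈ Y) (hadj : R.Adj x y) : R.Adj x' y' :=
  (hP.pairwise hX hY hXY).elim (fun h ↦ h hx' hy')
    fun h ↦ (disjoint_left.1 hRB _ _ hadj (h hx hy)).elim

lemma sdiff_nonempty (hP : IsGallaiPartition R B P) (hX : X ∈ P.parts) : (U \ X).Nonempty := by
  obtain ⟨Y, hY, hYX⟩ := hP.nontrivial.exists_ne X
  obtain ⟨y, hy⟩ := P.nonempty_of_mem_parts hY
  exact ⟨y, Finset.mem_sdiff.2 ⟨P.le hY hy, fun hyX ↦ hYX (P.eq_of_mem_parts hY hX hy hyX)⟩⟩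

lemma forall_adj_or_forall_adj (hP : IsGallaiPartition R B P) (hX : X ∈ P.parts) {y : V}
    (hy : y ∈ U \ X) : (∀ x ∈ X, R.Adj x y) ∨ ∀ x ∈ X, B.Adj x y := by
  obtain ⟨hyU, hyX⟩ := Finset.mem_sdiff.1 hy
  have hyP : y ∈ P.part y := P.mem_part_self.2 hyU
  have hXY : X ≠ P.part y := fun h ↦ hyX (h ▸ hyP)
  exact (hP.pairwise hX (P.part_mem.2 hyU) hXY).imp (fun h _ hx ↦ h hx hyP) fun h _ hx ↦ h hx hyP

lemma exists_forall_adj (hP : IsGallaiPartition R B P) (hB : ¬IsSplit B U) (hX : X ∈ P.parts) :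
    ∃ y ∈ U, ∀ x ∈ X, R.Adj x y := by
  by_contra! hR
  refine hB ⟨X, P.le hX, P.nonempty_of_mem_parts hX, hP.sdiff_nonempty hX, fun x hx y hy ↦ ?_⟩
  obtain ⟨z, hz, hzy⟩ := hR y (Finset.mem_sdiff.1 hy).1
  exact (hP.forall_adj_or_forall_adj hX hy).resolve_left (fun h ↦ hzy (h z hz)) x hx

/-- An edge `xy` of the matching `R` would be joined by `B` to the rest of `U`. -/
lemma isSplit_of_not_hasNearClique_one (hP : IsGallaiPartition R B P) (hRB : Disjoint R B)
    (hR : ¬HasNearClique R 1 U) : IsSplit R U ∨ IsSplit B U := by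
  by_contra! hsplit
  obtain ⟨X, hX⟩ := hP.nontrivial.nonempty
  obtain ⟨y, hy, hXy⟩ := hP.exists_forall_adj hsplit.2 hX
  obtain ⟨z, hz, hXz⟩ := hP.symm.exists_forall_adj hsplit.1 hX
  obtain ⟨x, hx⟩ := P.nonempty_of_mem_parts hX
  have hxU : x ∈ U := P.le hX hx
  have hxy : R.Adj x y := hXy x hx
  have hXx : ∀ x' ∈ X, x' = x := fun x' hx' ↦
    eq_of_adj_of_not_hasNearClique_one hR hy (P.le hX hx') hxU (hXy x' hx').symm hxy.symm
  have hY : P.part y ∈ P.parts := P.part_mem.2 hy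
  have hyY : y ∈ P.part y := P.mem_part_self.2 hy
  have hXY : X ≠ P.part y := fun h ↦ hxy.ne' (hXx y (h ▸ hyY))
  have hblue : ∀ w ∈ U \ {x, y}, B.Adj x w ∧ B.Adj y w := by
    intro w hw
    simp only [Finset.mem_sdiff, Finset.mem_insert, Finset.mem_singleton, not_or] at hw
    obtain ⟨hwU, hwx, hwy⟩ := hw
    have hRxw : ¬R.Adj x w := fun h ↦
      hwy (eq_of_adj_of_not_hasNearClique_one hR hxU hwU hy h hxy)
    have hRyw : ¬R.Adj y w := fun h ↦
      hwx (eq_of_adj_of_not_hasNearClique_one hR hy hwU hxU h hxy.symm)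
    have hwX : w ∈ U \ X := Finset.mem_sdiff.2 ⟨hwU, fun h ↦ hwx (hXx w h)⟩
    have hwY : w ∈ U \ P.part y := Finset.mem_sdiff.2 ⟨hwU, fun hw ↦ hRxw <|
      hP.adj_of_adj hRB hX hY hXY hx hx hyY hw hxy⟩
    exact ⟨(hP.forall_adj_or_forall_adj hX hwX).resolve_left (fun h ↦ hRxw (h x hx)) x hx,
      (hP.forall_adj_or_forall_adj hY hwY).resolve_left (fun h ↦ hRyw (h y hyY)) y hyY⟩
  have hBxz : B.Adj x z := hXz x hx
  refine hsplit.2 ⟨{x, y}, by simp [Finset.insert_subset_iff, hxU, hy], ⟨x, by simp⟩,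
    ⟨z, Finset.mem_sdiff.2 ⟨hz, ?_⟩⟩, fun x' hx' w hw ↦ ?_⟩
  · simp only [Finset.mem_insert, Finset.mem_singleton, not_or]
    exact ⟨hBxz.ne', fun h ↦ disjoint_left.1 hRB _ _ hxy (h ▸ hBxz)⟩
  · rw [Finset.mem_coe, Finset.mem_insert, Finset.mem_singleton] at hx'
    rcases hx' with rfl | rfl
    exacts [(hblue w hw).1, (hblue w hw).2]

lemma hasTwinPairs (hP : IsGallaiPartition R B P) (hRB : Disjoint R B) (hWU : W ⊆ U)
    (hW : ∀ X ∈ P.parts, #(W ∩ X) ≤ 2) : HasTwinPairs R B W := by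
  intro x hx y hy hxy hadj z hz hzx hzy
  have hX := P.part_mem.2 (hWU hx)
  have hxX := P.mem_part_self.2 (hWU hx)
  have hzZ := P.mem_part_self.2 (hWU hz)
  have hyX : y ∈ P.part x := by_contra fun hyX ↦ hadj <|
    (hP.forall_adj_or_forall_adj hX (Finset.mem_sdiff.2 ⟨hWU hy, hyX⟩)).imp (· x hxX) (· x hxX)
  have hzX : z ∉ P.part x := fun hzX ↦ (hW _ hX).not_gt <| Finset.two_lt_card.2
    ⟨x, Finset.mem_inter.2 ⟨hx, hxX⟩, y, Finset.mem_inter.2 ⟨hy, hyX⟩,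
      z, Finset.mem_inter.2 ⟨hz, hzX⟩, hxy, hzx.symm, hzy.symm⟩
  have hXZ : P.part x ≠ P.part z := fun h ↦ hzX (h ▸ hzZ)
  have hZ := P.part_mem.2 (hWU hz)
  exact ⟨(hP.forall_adj_or_forall_adj hX (Finset.mem_sdiff.2 ⟨hWU hz, hzX⟩)).imp
      (· x hxX) (· x hxX),
    ⟨hP.adj_of_adj hRB hX hZ hXZ hxX hyX hzZ hzZ, hP.adj_of_adj hRB hX hZ hXZ hyX hxX hzZ hzZ⟩,
    ⟨hP.symm.adj_of_adj hRB.symm hX hZ hXZ hxX hyX hzZ hzZ,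
      hP.symm.adj_of_adj hRB.symm hX hZ hXZ hyX hxX hzZ hzZ⟩⟩

/-- Keep two vertices of each part, or the whole part if it is smaller. -/
lemma exists_hasTwinPairs (hP : IsGallaiPartition R B P) (hRB : Disjoint R B) {M : ℝ}
    (hM : 1 ≤ M) (hcard : ∀ X ∈ P.parts, (#X : ℝ) ≤ 2 * M) :
    ∃ W ⊆ U, HasTwinPairs R B W ∧ (#U : ℝ) ≤ M * #W := by
  choose S hSX hScard using fun X : Finset V ↦ Finset.exists_subset_card_eq (min_le_left #X 2)
  have hdisj : (P.parts : Set (Finset V)).PairwiseDisjoint S := fun X hX Y hY hXY ↦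
    (P.disjoint hX hY hXY).mono (hSX X) (hSX Y)
  have hWU : P.parts.biUnion S ⊆ U :=
    Finset.biUnion_subset.2 fun X hX ↦ (hSX X).trans (P.le hX)
  refine ⟨P.parts.biUnion S, hWU, hP.hasTwinPairs hRB hWU fun X hX ↦ ?_, ?_⟩
  · refine (Finset.card_le_card fun x hx ↦ ?_).trans ((hScard X).trans_le (min_le_right _ _))
    obtain ⟨hxW, hxX⟩ := Finset.mem_inter.1 hx
    obtain ⟨Y, hY, hxY⟩ := Finset.mem_biUnion.1 hxW
    exact P.eq_of_mem_parts hY hX (hSX Y hxY) hxX ▸ hxY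
  · rw [← P.sum_card_parts, Finset.card_biUnion hdisj]
    push_cast
    rw [Finset.mul_sum]
    refine Finset.sum_le_sum fun X hX ↦ ?_
    rw [hScard]
    rcases le_total #X 2 with h | h
    · rw [min_eq_left h]
      exact le_mul_of_one_le_left (by positivity) hM
    · rw [min_eq_right h, mul_comm]
      exact_mod_cast hcard X hX

end IsGallaiPartition

end FinsetPartition

/-! ### The upper bound -/

section UpperBound

variable {V κ : Type*} {R B G : SimpleGraph V} {U X A C Y : Finset V} {n : ℕ} {M : ℝ}

/-- The factor by which a color may increase the number of vertices. A color of level `ℓ` has no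
`HasNearClique _ (ℓ + 1)`, so levels `0`, `1` and `2` stand for `P₃`, `K₄` minus an edge, and `K₅`
minus an edge. -/
noncomputable def levelWeight : Fin 3 → ℝ := ![1, √5, √17]

lemma sqrt_five_mem_Icc : √5 ∈ Set.Icc (2.236 : ℝ) 2.237 :=
  ⟨Real.le_sqrt_of_sq_le (by norm_num), Real.sqrt_le_iff.2 (by norm_num)⟩

lemma sqrt_seventeen_mem_Icc : √17 ∈ Set.Icc (4.123 : ℝ) 4.124 :=
  ⟨Real.le_sqrt_of_sq_le (by norm_num), Real.sqrt_le_iff.2 (by norm_num)⟩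

lemma sqrt_five_mul_sqrt_seventeen_mem_Icc : √5 * √17 ∈ Set.Icc (9.21 : ℝ) 9.23 := by
  rw [← Real.sqrt_mul (by norm_num)]
  exact ⟨Real.le_sqrt_of_sq_le (by norm_num), Real.sqrt_le_iff.2 (by norm_num)⟩

lemma one_le_levelWeight (i : Fin 3) : 1 ≤ levelWeight i := by
  fin_cases i <;> simp [levelWeight]

lemma not_hasNearClique_of_nonempty (hAC : G.IsCompleteBetween A C) (hA : A.Nonempty)
    (hAU : A ⊆ U) (hCU : C ⊆ U) (hU : ¬HasNearClique G (n + 1) U) : ¬HasNearClique G n C := by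
  obtain ⟨x, hx⟩ := hA
  exact fun h ↦ hU (h.of_adj (hAU hx) fun y hy ↦ ⟨hCU hy, hAC hx hy⟩)

lemma not_hasNearClique_of_adj {x y : V} (hAC : G.IsCompleteBetween A C) (hx : x ∈ A) (hy : y ∈ A)
    (hxy : G.Adj x y) (hAU : A ⊆ U) (hCU : C ⊆ U) (hU : ¬HasNearClique G (n + 2) U) :
    ¬HasNearClique G n C := fun h ↦
  hU <| (h.of_adj (U := insert y C) (Finset.mem_insert_self y C)
    fun z hz ↦ ⟨Finset.mem_insert_of_mem hz, hAC hy hz⟩).of_adj (hAU hx) fun z hz ↦ by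
      rcases Finset.mem_insert.1 hz with rfl | hz
      exacts [⟨hAU hy, hxy⟩, ⟨hCU hz, hAC hx hz⟩]

lemma card_le_one_of_not_hasNearClique_zero (h : ¬HasNearClique G 0 U) : #U ≤ 1 := by
  by_contra! hU
  obtain ⟨x, hx, y, hy, hxy⟩ := Finset.one_lt_card.1 hU
  exact h ⟨∅, by simp, by simp, x, hx, y, hy, hxy, by simp⟩

theorem card_le_of_isSplit (hU : IsSplit G U) (hM : 1 ≤ M)
    (ih : ∀ Y ⊂ U, ∀ i : Fin 3, ¬HasNearClique G (i + 1) Y → (#Y : ℝ) ≤ 2 * M * levelWeight i)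
    {i : Fin 3} (hG : ¬HasNearClique G (i + 1) U) : (#U : ℝ) ≤ 2 * M * levelWeight i := by
  obtain ⟨A, hAU, hA, hC, hAC⟩ := hU
  have hCU : U \ A ⊆ U := Finset.sdiff_subset
  have ihA := ih A (hAU.ssubset_of_ne fun h ↦ by simp [h] at hC)
  have ihC := ih (U \ A) (Finset.sdiff_ssubset hAU hA)
  have hcard : (#U : ℝ) = #A + #(U \ A) := by
    exact_mod_cast (add_comm _ _).trans (Finset.card_sdiff_add_card_eq_card hAU) |>.symm
  have left {n : ℕ} : ¬HasNearClique G (n + 1) U → ¬HasNearClique G n A :=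
    not_hasNearClique_of_nonempty hAC.symm hC hCU hAU
  have right {n : ℕ} : ¬HasNearClique G (n + 1) U → ¬HasNearClique G n ↑(U \ A) :=
    not_hasNearClique_of_nonempty hAC hA hAU hCU
  have h5 := sqrt_five_mem_Icc
  have h17 := sqrt_seventeen_mem_Icc
  match i, hG with
  | 0, hG =>
    have hA1 : (#A : ℝ) ≤ 1 := by exact_mod_cast card_le_one_of_not_hasNearClique_zero (left hG)
    have hC1 : (#(U \ A) : ℝ) ≤ 1 := by
      exact_mod_cast card_le_one_of_not_hasNearClique_zero (right hG)
    change _ ≤ 2 * M * 1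
    linarith
  | 1, hG =>
    have hA1 : #A ≤ 2 * M * 1 := ihA 0 (left hG)
    have hC1 : #(U \ A) ≤ 2 * M * 1 := ihC 0 (right hG)
    calc (#U : ℝ) ≤ 2 * M * (1 + 1) := by linarith
      _ ≤ 2 * M * √5 := by gcongr; linarith [h5.1]
  | 2, hG =>
    have hlevels : (#U : ℝ) ≤ 2 * M * (1 + √5) := by
      by_cases hadj : ∃ x ∈ U \ A, ∃ y ∈ U \ A, G.Adj x y
      · obtain ⟨x, hx, y, hy, hxy⟩ := hadj
        have hA1 : #A ≤ 2 * M * 1 :=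
          ihA 0 (not_hasNearClique_of_adj hAC.symm hx hy hxy hCU hAU hG)
        have hC2 : #(U \ A) ≤ 2 * M * √5 := ihC 1 (right hG)
        linarith
      · have hA2 : #A ≤ 2 * M * √5 := ihA 1 (left hG)
        have hC1 : #(U \ A) ≤ 2 * M * 1 := ihC 0 fun h ↦ hadj h.exists_adj
        linarith
    calc (#U : ℝ) ≤ 2 * M * (1 + √5) := hlevels
      _ ≤ 2 * M * √17 := by gcongr; linarith [h5.2, h17.1]

/-- The inductive bound for two colors `R` and `B`; the constant `M` accounts for the weights of
the other colors. -/
def PairBound (R B : SimpleGraph V) (M : ℝ) (U : Finset V) : Prop :=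
  ∀ i j : Fin 3, ¬HasNearClique R (i + 1) U → ¬HasNearClique B (j + 1) U →
    (#U : ℝ) ≤ 2 * M * (levelWeight i * levelWeight j)

lemma PairBound.symm (h : PairBound R B M U) : PairBound B R M U :=
  fun i j hB hR ↦ mul_comm (levelWeight i) _ ▸ h j i hR hB

/-- `U` is covered by a set `X`, a set `A` joined completely to `X` by `R`, and a set `C` joined
completely to `X` by `B`. In the application `X` is a part of a Gallai partition. -/
structure IsRedBlueCover (R B : SimpleGraph V) (U X A C : Finset V) : Prop where
  part_ssubset : X ⊂ U
  red_ssubset : A ⊂ U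
  blue_ssubset : C ⊂ U
  part_nonempty : X.Nonempty
  red_nonempty : A.Nonempty
  blue_nonempty : C.Nonempty
  card_le : #U ≤ #X + #A + #C
  red : R.IsCompleteBetween X A
  blue : B.IsCompleteBetween X C

namespace IsRedBlueCover

lemma not_hasNearClique_part_red (h : IsRedBlueCover R B U X A C)
    (hU : ¬HasNearClique R (n + 1) U) : ¬HasNearClique R n X :=
  not_hasNearClique_of_nonempty h.red.symm h.red_nonempty h.red_ssubset.1 h.part_ssubset.1 hU

lemma not_hasNearClique_part_blue (h : IsRedBlueCover R B U X A C)
    (hU : ¬HasNearClique B (n + 1) U) : ¬HasNearClique B n X :=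
  not_hasNearClique_of_nonempty h.blue.symm h.blue_nonempty h.blue_ssubset.1 h.part_ssubset.1 hU

lemma not_hasNearClique_blue (h : IsRedBlueCover R B U X A C)
    (hU : ¬HasNearClique B (n + 1) U) : ¬HasNearClique B n C :=
  not_hasNearClique_of_nonempty h.blue h.part_nonempty h.part_ssubset.1 h.blue_ssubset.1 hU

lemma not_hasNearClique_red_of_adj (h : IsRedBlueCover R B U X A C)
    (hadj : ∃ x ∈ X, ∃ y ∈ X, R.Adj x y) (hU : ¬HasNearClique R (n + 2) U) :
    ¬HasNearClique R n A := by
  obtain ⟨x, hx, y, hy, hxy⟩ := hadj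
  exact not_hasNearClique_of_adj h.red hx hy hxy h.part_ssubset.1 h.red_ssubset.1 hU

lemma card_le_of_level_one (h : IsRedBlueCover R B U X A C)
    (hadj : ∃ x ∈ X, ∃ y ∈ X, R.Adj x y) (hM : 1 ≤ M) (ih : ∀ Y ⊂ U, PairBound R B M Y)
    (hR : ¬HasNearClique R 2 U) {j : Fin 3} (hj : j ≠ 0) (hB : ¬HasNearClique B (j + 1) U) :
    (#U : ℝ) ≤ 2 * M * (√5 * levelWeight j) := by
  have hcard : (#U : ℝ) ≤ #X + #A + #C := by exact_mod_cast h.card_le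
  have hA : (#A : ℝ) ≤ 1 := by
    exact_mod_cast card_le_one_of_not_hasNearClique_zero (h.not_hasNearClique_red_of_adj hadj hR)
  have hX1 := h.not_hasNearClique_part_red hR
  have hC2 : ¬HasNearClique R 2 C := fun hC ↦ hR (hC.mono h.blue_ssubset.1)
  have h5 := sqrt_five_mem_Icc
  have h5_sq : √5 * √5 = 5 := Real.mul_self_sqrt (by norm_num)
  have h85 := sqrt_five_mul_sqrt_seventeen_mem_Icc
  match j, hj, hB with
  | 1, _, hB =>
    have hX : #X ≤ 2 * M * (1 * 1) :=
      ih X h.part_ssubset 0 0 hX1 (h.not_hasNearClique_part_blue hB)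
    have hC : #C ≤ 2 * M * (√5 * 1) := ih C h.blue_ssubset 1 0 hC2 (h.not_hasNearClique_blue hB)
    calc (#U : ℝ) ≤ 2 * M * (3 / 2 + √5) := by linarith
      _ ≤ 2 * M * (√5 * √5) := by gcongr; linarith [h5.2]
  | 2, _, hB =>
    have hX : #X ≤ 2 * M * (1 * √5) :=
      ih X h.part_ssubset 0 1 hX1 (h.not_hasNearClique_part_blue hB)
    have hC : #C ≤ 2 * M * (√5 * √5) := ih C h.blue_ssubset 1 1 hC2 (h.not_hasNearClique_blue hB)
    calc (#U : ℝ) ≤ 2 * M * (√5 + 1 / 2 + √5 * √5) := by linarith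
      _ ≤ 2 * M * (√5 * √17) := by gcongr; linarith [h5.2, h85.1]

lemma card_le_of_level_two (h : IsRedBlueCover R B U X A C)
    (hadj : ∃ x ∈ X, ∃ y ∈ X, R.Adj x y) (hM : 1 ≤ M) (ih : ∀ Y ⊂ U, PairBound R B M Y)
    (hR : ¬HasNearClique R 3 U) {j : Fin 3} (hj : j ≠ 0) (hB : ¬HasNearClique B (j + 1) U) :
    (#U : ℝ) ≤ 2 * M * (√17 * levelWeight j) := by
  have hcard : (#U : ℝ) ≤ #X + #A + #C := by exact_mod_cast h.card_le
  have hX2 := h.not_hasNearClique_part_red hR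
  have hA1 := h.not_hasNearClique_red_of_adj hadj hR
  have hC3 : ¬HasNearClique R 3 C := fun hC ↦ hR (hC.mono h.blue_ssubset.1)
  have hAB : ¬HasNearClique B (j + 1) A := fun hA ↦ hB (hA.mono h.red_ssubset.1)
  have hA := ih A h.red_ssubset 0 j hA1 hAB
  have h5 := sqrt_five_mem_Icc
  have h17 := sqrt_seventeen_mem_Icc
  have h5_sq : √5 * √5 = 5 := Real.mul_self_sqrt (by norm_num)
  have h17_sq : √17 * √17 = 17 := Real.mul_self_sqrt (by norm_num)
  have h85 := sqrt_five_mul_sqrt_seventeen_mem_Icc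
  match j, hj, hB, hA with
  | 1, _, hB, (hA : #A ≤ 2 * M * (1 * √5)) =>
    have hX : #X ≤ 2 * M * (√5 * 1) :=
      ih X h.part_ssubset 1 0 hX2 (h.not_hasNearClique_part_blue hB)
    have hC : #C ≤ 2 * M * (√17 * 1) := ih C h.blue_ssubset 2 0 hC3 (h.not_hasNearClique_blue hB)
    calc (#U : ℝ) ≤ 2 * M * (√5 + √5 + √17) := by linarith
      _ ≤ 2 * M * (√17 * √5) := by gcongr; linarith [h5.2, h17.2, h85.1]
  | 2, _, hB, (hA : #A ≤ 2 * M * (1 * √17)) =>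
    by_cases hblue : ∃ x ∈ X, ∃ y ∈ X, B.Adj x y
    · obtain ⟨x, hx, y, hy, hxy⟩ := hblue
      have hX : #X ≤ 2 * M * (√5 * √5) :=
        ih X h.part_ssubset 1 1 hX2 (h.not_hasNearClique_part_blue hB)
      have hC : #C ≤ 2 * M * (√17 * 1) := ih C h.blue_ssubset 2 0 hC3
        (not_hasNearClique_of_adj h.blue hx hy hxy h.part_ssubset.1 h.blue_ssubset.1 hB)
      calc (#U : ℝ) ≤ 2 * M * (√5 * √5 + √17 + √17) := by linarith
        _ ≤ 2 * M * (√17 * √17) := by gcongr; linarith [h17.2]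
    · have hX : #X ≤ 2 * M * (√5 * 1) :=
        ih X h.part_ssubset 1 0 hX2 fun hX ↦ hblue hX.exists_adj
      have hC : #C ≤ 2 * M * (√17 * √5) :=
        ih C h.blue_ssubset 2 1 hC3 (h.not_hasNearClique_blue hB)
      calc (#U : ℝ) ≤ 2 * M * (√5 + √17 + √17 * √5) := by linarith
        _ ≤ 2 * M * (√17 * √17) := by gcongr; linarith [h5.2, h17.2, h85.2]

end IsRedBlueCover

theorem HasTwinPairs.card_le_levelWeight {W : Finset V} (h : HasTwinPairs R B W) {i j : Fin 3}
    (hi : i ≠ 0) (hj : j ≠ 0) (hR : ¬HasNearClique R (i + 1) W)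
    (hB : ¬HasNearClique B (j + 1) W) : (#W : ℝ) ≤ 2 * (levelWeight i * levelWeight j) := by
  have h5_sq : √5 * √5 = 5 := Real.mul_self_sqrt (by norm_num)
  have h17_sq : √17 * √17 = 17 := Real.mul_self_sqrt (by norm_num)
  have h85 := sqrt_five_mul_sqrt_seventeen_mem_Icc
  match i, j, hi, hj, hR, hB with
  | 1, 1, _, _, hR, hB =>
    have hW : (#W : ℝ) ≤ 10 := by exact_mod_cast h.card_le_ten hR hB
    change _ ≤ 2 * (√5 * √5)
    linarith
  | 1, 2, _, _, hR, hB =>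
    have hW : (#W : ℝ) ≤ 16 := by exact_mod_cast h.card_le_sixteen hR hB
    change _ ≤ 2 * (√5 * √17)
    linarith [h85.1]
  | 2, 1, _, _, hR, hB =>
    have hW : (#W : ℝ) ≤ 16 := by exact_mod_cast h.symm.card_le_sixteen hB hR
    change _ ≤ 2 * (√17 * √5)
    linarith [h85.1]
  | 2, 2, _, _, hR, hB =>
    have hW : (#W : ℝ) ≤ 34 := by exact_mod_cast h.card_le_thirtyFour hR hB
    change _ ≤ 2 * (√17 * √17)
    linarith

namespace IsGallaiPartition

variable {P : Finpartition U}

lemma exists_isRedBlueCover (hP : IsGallaiPartition R B P) (hRU : ¬IsSplit R U)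
    (hBU : ¬IsSplit B U) (hX : X ∈ P.parts) : ∃ A C, IsRedBlueCover R B U X A C := by
  obtain ⟨x, hx⟩ := P.nonempty_of_mem_parts hX
  obtain ⟨y, hy, hXy⟩ := hP.exists_forall_adj hBU hX
  obtain ⟨z, hz, hXz⟩ := hP.symm.exists_forall_adj hRU hX
  refine ⟨{y ∈ U | ∀ x ∈ X, R.Adj x y}, {y ∈ U | ∀ x ∈ X, B.Adj x y}, ?_, ?_, ?_, ⟨x, hx⟩,
    ⟨y, Finset.mem_filter.2 ⟨hy, hXy⟩⟩, ⟨z, Finset.mem_filter.2 ⟨hz, hXz⟩⟩, ?_,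
    fun x hx y hy ↦ (Finset.mem_filter.1 hy).2 x hx,
    fun x hx y hy ↦ (Finset.mem_filter.1 hy).2 x hx⟩
  · exact Finset.ssubset_iff_exists_subset_erase.2 ⟨y, hy, Finset.subset_erase.2
      ⟨P.le hX, fun h ↦ (hXy y h).ne rfl⟩⟩
  · exact Finset.filter_ssubset.2 ⟨x, P.le hX hx, fun h ↦ (h x hx).ne rfl⟩
  · exact Finset.filter_ssubset.2 ⟨x, P.le hX hx, fun h ↦ (h x hx).ne rfl⟩
  · rw [← Finset.card_sdiff_add_card_eq_card (P.le hX), add_comm, add_assoc]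
    gcongr
    refine (Finset.card_le_card fun w hw ↦ ?_).trans (Finset.card_union_le _ _)
    rw [← Finset.filter_or, Finset.mem_filter]
    exact ⟨(Finset.mem_sdiff.1 hw).1, hP.forall_adj_or_forall_adj hX hw⟩

lemma pairBound_of_exists_adj (hP : IsGallaiPartition R B P) (hRU : ¬IsSplit R U)
    (hBU : ¬IsSplit B U) (hM : 1 ≤ M) (ih : ∀ Y ⊂ U, PairBound R B M Y)
    (hadj : ∃ X ∈ P.parts, ∃ x ∈ X, ∃ y ∈ X, R.Adj x y) {i j : Fin 3} (hi : i ≠ 0) (hj : j ≠ 0)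
    (hR : ¬HasNearClique R (i + 1) U) (hB : ¬HasNearClique B (j + 1) U) :
    (#U : ℝ) ≤ 2 * M * (levelWeight i * levelWeight j) := by
  obtain ⟨X, hX, hadj⟩ := hadj
  obtain ⟨A, C, hcover⟩ := hP.exists_isRedBlueCover hRU hBU hX
  match i, hi, hR with
  | 1, _, hR => exact hcover.card_le_of_level_one hadj hM ih hR hj hB
  | 2, _, hR => exact hcover.card_le_of_level_two hadj hM ih hR hj hB

theorem pairBound (hP : IsGallaiPartition R B P) (hRB : Disjoint R B) (hRU : ¬IsSplit R U)
    (hBU : ¬IsSplit B U) (hM : 1 ≤ M) (ih : ∀ Y ⊂ U, PairBound R B M Y) :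
    PairBound R B M U := by
  intro i j hR hB
  have hi : i ≠ 0 := by
    rintro rfl
    exact (hP.isSplit_of_not_hasNearClique_one hRB hR).elim hRU hBU
  have hj : j ≠ 0 := by
    rintro rfl
    exact (hP.symm.isSplit_of_not_hasNearClique_one hRB.symm hB).elim hBU hRU
  by_cases hred : ∃ X ∈ P.parts, ∃ x ∈ X, ∃ y ∈ X, R.Adj x y
  · exact hP.pairBound_of_exists_adj hRU hBU hM ih hred hi hj hR hB
  by_cases hblue : ∃ X ∈ P.parts, ∃ x ∈ X, ∃ y ∈ X, B.Adj x y
  · rw [mul_comm (levelWeight i)]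
    exact hP.symm.pairBound_of_exists_adj hBU hRU hM (fun Y hY ↦ (ih Y hY).symm) hblue hj hi hB hR
  have hparts : ∀ X ∈ P.parts, (#X : ℝ) ≤ 2 * M := by
    intro X hX
    obtain ⟨_, _, hcover⟩ := hP.exists_isRedBlueCover hRU hBU hX
    have hX1 : #X ≤ 2 * M * (1 * 1) := ih X hcover.part_ssubset 0 0
      (fun h ↦ hred ⟨X, hX, h.exists_adj⟩) fun h ↦ hblue ⟨X, hX, h.exists_adj⟩
    linarith
  obtain ⟨W, hWU, hW, hcard⟩ := hP.exists_hasTwinPairs hRB hM hparts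
  calc (#U : ℝ) ≤ M * #W := hcard
    _ ≤ M * (2 * (levelWeight i * levelWeight j)) := by
      gcongr
      exact hW.card_le_levelWeight hi hj (fun h ↦ hR (h.mono hWU)) fun h ↦ hB (h.mono hWU)
    _ = 2 * M * (levelWeight i * levelWeight j) := by ring

end IsGallaiPartition

section Induction

variable {c : Sym2 V → κ} {t : κ → Fin 3} {a b : κ}

lemma disjoint_colorGraph (hab : a ≠ b) : Disjoint (colorGraph c a) (colorGraph c b) :=
  disjoint_left.2 fun _ _ ha hb ↦
    hab ((colorGraph_adj.1 ha).1.symm.trans (colorGraph_adj.1 hb).1)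

lemma one_le_prod_levelWeight (s : Finset κ) (t : κ → Fin 3) : 1 ≤ ∏ i ∈ s, levelWeight (t i) :=
  Finset.one_le_prod fun i _ ↦ one_le_levelWeight (t i)

lemma prod_levelWeight_update {s : Finset κ} (t : κ → Fin 3) (ha : a ∈ s) (m : Fin 3) :
    ∏ i ∈ s, levelWeight (Function.update t a m i) =
      (∏ i ∈ s.erase a, levelWeight (t i)) * levelWeight m := by
  rw [← Finset.prod_erase_mul _ _ ha, Function.update_self]
  congr 1
  exact Finset.prod_congr rfl fun i hi ↦ by rw [Function.update_of_ne (Finset.ne_of_mem_erase hi)]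

/-- The assignment `t` of levels to the colors admits the coloring `c` on `U`. -/
def HasLevels (c : Sym2 V → κ) (t : κ → Fin 3) (U : Finset V) : Prop :=
  ∀ i, ¬HasNearClique (colorGraph c i) (t i + 1) U

lemma HasLevels.subset (h : HasLevels c t U) (hYU : Y ⊆ U) : HasLevels c t Y :=
  fun i hi ↦ h i (hi.mono hYU)

lemma HasLevels.update (h : HasLevels c t U) {m : Fin 3}
    (ha : ¬HasNearClique (colorGraph c a) (m + 1) U) : HasLevels c (Function.update t a m) U := by
  intro i
  obtain rfl | hia := eq_or_ne i a
  · rwa [Function.update_self]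
  · rw [Function.update_of_ne hia]
    exact h i

variable [Fintype κ]

/-- The bound on the size of `U` given by every admissible assignment of levels. -/
def LevelBound (c : Sym2 V → κ) (U : Finset V) : Prop :=
  ∀ t, HasLevels c t U → (#U : ℝ) ≤ 2 * ∏ i, levelWeight (t i)

lemma LevelBound.card_le (hU : LevelBound c U) (ht : HasLevels c t U) {m : Fin 3}
    (ha : ¬HasNearClique (colorGraph c a) (m + 1) U) :
    (#U : ℝ) ≤ 2 * (∏ i ∈ Finset.univ.erase a, levelWeight (t i)) * levelWeight m := by
  rw [mul_assoc, ← prod_levelWeight_update t (Finset.mem_univ a)]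
  exact hU _ (ht.update ha)

lemma LevelBound.pairBound (hU : LevelBound c U) (ht : HasLevels c t U) (hab : a ≠ b) :
    PairBound (colorGraph c a) (colorGraph c b)
      (∏ i ∈ (Finset.univ.erase b).erase a, levelWeight (t i)) U := by
  intro i j ha hb
  have ha_mem : a ∈ Finset.univ.erase b := by simp [hab]
  rw [mul_assoc, ← mul_assoc (∏ _ ∈ _, _), ← prod_levelWeight_update t ha_mem,
    ← prod_levelWeight_update _ (Finset.mem_univ b)]
  exact hU _ ((ht.update ha).update hb)

lemma LevelBound.of_isSplit (hU : IsSplit (colorGraph c a) U) (ih : ∀ Y ⊂ U, LevelBound c Y) :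
    LevelBound c U := by
  intro t ht
  rw [← Finset.prod_erase_mul _ _ (Finset.mem_univ a), ← mul_assoc]
  exact card_le_of_isSplit hU (one_le_prod_levelWeight _ t)
    (fun Y hY _ ↦ (ih Y hY).card_le (ht.subset hY.1)) (ht a)

lemma IsGallaiPartition.levelBound {P : Finpartition U}
    (hP : IsGallaiPartition (colorGraph c a) (colorGraph c b) P)
    (hsplit : ∀ i, ¬IsSplit (colorGraph c i) U) (ih : ∀ Y ⊂ U, LevelBound c Y) :
    LevelBound c U := by
  intro t ht
  have hab : a ≠ b := by
    rintro rfl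
    obtain ⟨X, hX⟩ := hP.nontrivial.nonempty
    exact hsplit a ⟨X, P.le hX, P.nonempty_of_mem_parts hX, hP.sdiff_nonempty hX, fun x hx y hy ↦
      or_self_iff.1 (hP.forall_adj_or_forall_adj hX hy) x hx⟩
  have hbound := hP.pairBound (disjoint_colorGraph hab) (hsplit a) (hsplit b)
    (one_le_prod_levelWeight _ t) (fun Y hY ↦ (ih Y hY).pairBound (ht.subset hY.1) hab)
    (t a) (t b) (ht a) (ht b)
  have ha_mem : a ∈ Finset.univ.erase b := by simp [hab]
  rwa [mul_assoc, ← mul_assoc (∏ _ ∈ _, _), Finset.prod_erase_mul _ _ ha_mem,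
    Finset.prod_erase_mul _ _ (Finset.mem_univ b)] at hbound

theorem IsGallai.levelBound (hc : IsGallai c) (U : Finset V) : LevelBound c U := by
  induction U using Finset.strongInduction with | _ U ih
  by_cases hU : U.Nontrivial
  · by_cases hsplit : ∃ a, IsSplit (colorGraph c a) U
    · obtain ⟨a, ha⟩ := hsplit
      exact .of_isSplit ha ih
    · obtain ⟨a, b, P, hP⟩ := hc.exists_isGallaiPartition hU
      exact hP.levelBound (not_exists.1 hsplit) ih
  · intro t _
    have hcard : (#U : ℝ) ≤ 1 := by
      exact_mod_cast Finset.card_le_one_iff_subsingleton.2 (Set.not_nontrivial_iff.1 hU)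
    linarith [one_le_prod_levelWeight Finset.univ t]

end Induction

end UpperBound

/-! ### The lower bound -/

section LowerBound

variable {V W κ : Type*} {d : Sym2 V → κ} {c : Sym2 W → κ} {i p q : κ}

/-- The coloring of the complete graph on `V × W` obtained from `d` by substituting a copy of `c`
for each vertex. -/
noncomputable def lexColoring (d : Sym2 V → κ) (c : Sym2 W → κ) : Sym2 (V × W) → κ :=
  fun e ↦ if (e.map Prod.fst).IsDiag then c (e.map Prod.snd) else d (e.map Prod.fst)

lemma colorGraph_lexColoring_adj {x y : V × W} : (colorGraph (lexColoring d c) i).Adj x y ↔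
    (colorGraph d i).Adj x.1 y.1 ∨ x.1 = y.1 ∧ (colorGraph c i).Adj x.2 y.2 := by
  simp only [colorGraph_adj, lexColoring, Sym2.map_mk, Sym2.mk_isDiag_iff, Prod.ext_iff, ne_eq]
  by_cases h : x.1 = y.1 <;> simp [h]

lemma IsGallai.lex (hd : IsGallai d) (hc : IsGallai c) : IsGallai (lexColoring d c) := by
  rintro ⟨x, u⟩ ⟨y, v⟩ ⟨z, w⟩ hxy hxz hyz
  simp only [lexColoring, Sym2.map_mk, Sym2.mk_isDiag_iff]
  obtain rfl | hxy₁ := eq_or_ne x y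
  · obtain rfl | hxz₁ := eq_or_ne x z
    · simpa using hc (by simpa using hxy) (by simpa using hxz) (by simpa using hyz)
    · simp [hxz₁]
  · obtain rfl | hxz₁ := eq_or_ne x z
    · simp [hxy₁, hxy₁.symm, Sym2.eq_swap (a := x)]
    · obtain rfl | hyz₁ := eq_or_ne y z
      · simp [hxy₁]
      · simpa [hxy₁, hxz₁, hyz₁] using hd hxy₁ hxz₁ hyz₁

lemma cliqueFree_of_hom {G : SimpleGraph V} {H : SimpleGraph W} {n : ℕ} (hG : G.CliqueFree n)
    (f : H →g G) : H.CliqueFree n := by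
  by_contra hH
  let g := f.comp (topEmbeddingOfNotCliqueFree hH).toHom
  exact (g.toCopy g.injective_of_top_hom).isContained.not_cliqueFree hG

/-- A Gallai coloring that uses only colors of `S` and has no clique on `m i` vertices in
color `i`. -/
structure IsCliqueBounded (c : Sym2 V → κ) (m : κ → ℕ) (S : Set κ) : Prop where
  isGallai : IsGallai c
  eq_bot : ∀ i ∉ S, colorGraph c i = ⊥
  cliqueFree : ∀ i, (colorGraph c i).CliqueFree (m i)

namespace IsCliqueBounded

variable {m : κ → ℕ} {S T : Set κ}

lemma mono (hc : IsCliqueBounded c m S) (hST : S ⊆ T) : IsCliqueBounded c m T :=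
  ⟨hc.isGallai, fun i hi ↦ hc.eq_bot i fun h ↦ hi (hST h), hc.cliqueFree⟩

lemma lex (hd : IsCliqueBounded d m S) (hc : IsCliqueBounded c m T) (hST : Disjoint S T) :
    IsCliqueBounded (lexColoring d c) m (S ∪ T) where
  isGallai := hd.isGallai.lex hc.isGallai
  eq_bot i hi := by
    ext x y
    simp [colorGraph_lexColoring_adj, hd.eq_bot i fun h ↦ hi (.inl h),
      hc.eq_bot i fun h ↦ hi (.inr h)]
  cliqueFree i := by
    by_cases hi : i ∈ S
    · have hbot := hc.eq_bot i (hST.notMem_of_mem_left hi)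
      exact cliqueFree_of_hom (hd.cliqueFree i)
        ⟨Prod.fst, fun h ↦ by simpa [colorGraph_lexColoring_adj, hbot] using h⟩
    · refine cliqueFree_of_hom (hc.cliqueFree i) ⟨Prod.snd, fun h ↦ ?_⟩
      rw [colorGraph_lexColoring_adj, hd.eq_bot i hi] at h
      exact h.elim False.elim And.right

lemma of_subsingleton [Subsingleton V] (c : Sym2 V → κ) (hm : ∀ i, 2 ≤ m i) (S : Set κ) :
    IsCliqueBounded c m S where
  isGallai x y _ hxy := absurd (Subsingleton.elim x y) hxy
  eq_bot _ _ := Subsingleton.elim _ _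
  cliqueFree i := Subsingleton.elim ⊥ (colorGraph c i) ▸ cliqueFree_bot (hm i)

theorem exists_prod [Nonempty κ] {ι : Type*} (s : Finset ι) {S : ι → Set κ} {N : ι → ℕ}
    (hm : ∀ i, 2 ≤ m i) (hS : (s : Set ι).PairwiseDisjoint S)
    (h : ∀ j ∈ s, ∃ c : Sym2 (Fin (N j)) → κ, IsCliqueBounded c m (S j)) :
    ∃ (V : Type) (c : Sym2 V → κ), Nat.card V = ∏ j ∈ s, N j ∧
      IsCliqueBounded c m (⋃ j ∈ s, S j) := by
  induction s using Finset.induction_on with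
  | empty => exact ⟨Unit, fun _ ↦ Classical.arbitrary κ, by simp, of_subsingleton _ hm _⟩
  | insert j s hj ih =>
    rw [Finset.coe_insert, Set.pairwiseDisjoint_insert_of_notMem (mod_cast hj)] at hS
    obtain ⟨V, c, hV, hc⟩ := ih hS.1 fun i hi ↦ h i (Finset.mem_insert_of_mem hi)
    obtain ⟨d, hd⟩ := h j (Finset.mem_insert_self j s)
    refine ⟨Fin (N j) × V, lexColoring d c, by simp [hV, hj], ?_⟩
    rw [Finset.set_biUnion_insert]
    exact hd.lex hc (Set.disjoint_iUnion₂_right.2 hS.2)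

theorem exists_double [Finite V] (hc : IsCliqueBounded d m S) {e : κ} (he : e ∉ S) :
    ∃ c : Sym2 (Fin (2 * Nat.card V)) → κ, IsGallai c ∧
      (∀ i ≠ e, (colorGraph c i).CliqueFree (m i)) ∧
      ∀ x y z, (colorGraph c e).Adj x y → (colorGraph c e).Adj x z → y = z := by
  let c₀ : Sym2 (V × Fin 2) → κ := lexColoring d fun _ ↦ e
  have hadj {i : κ} {x y : V × Fin 2} : (colorGraph c₀ i).Adj x y ↔
      (colorGraph d i).Adj x.1 y.1 ∨ x.1 = y.1 ∧ e = i ∧ x.2 ≠ y.2 := by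
    rw [colorGraph_lexColoring_adj, colorGraph_adj (c := fun _ ↦ e)]
  let σ : Fin (2 * Nat.card V) ≃ V × Fin 2 := (Finite.equivFinOfCardEq (by simp [mul_comm])).symm
  have hc₀ : IsGallai c₀ := hc.isGallai.lex fun _ _ _ _ _ _ ↦ .inl rfl
  refine ⟨c₀ ∘ Sym2.map σ, hc₀.comp_map σ.injective, ?_, ?_⟩
  · intro i hi
    rw [colorGraph_comp_map _ σ.injective]
    exact cliqueFree_of_hom (hc.cliqueFree i)
      ⟨fun x ↦ (σ x).1, fun h ↦ (hadj.1 h).resolve_right fun h ↦ hi h.2.1.symm⟩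
  · intro x y z hxy hxz
    rw [colorGraph_comp_map _ σ.injective, comap_adj, hadj, hc.eq_bot e he] at hxy hxz
    obtain ⟨hxy₁, -, hxy₂⟩ := hxy.resolve_left id
    obtain ⟨hxz₁, -, hxz₂⟩ := hxz.resolve_left id
    exact σ.injective (Prod.ext (hxy₁.symm.trans hxz₁) (by omega))

end IsCliqueBounded

/-- The two-coloring with color graphs `G` and `Gᶜ`. -/
noncomputable def complColoring (G : SimpleGraph V) (p q : κ) : Sym2 V → κ :=
  fun e ↦ if e ∈ G.edgeSet then p else q

lemma isCliqueBounded_complColoring {G : SimpleGraph V} {m : κ → ℕ} (hm : ∀ i, 2 ≤ m i)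
    (hpq : p ≠ q) (hG : G.CliqueFree (m p)) (hGc : Gᶜ.CliqueFree (m q)) :
    IsCliqueBounded (complColoring G p q) m {p, q} := by
  have hadj {i : κ} {x y : V} : (colorGraph (complColoring G p q) i).Adj x y ↔
      (i = p ∧ G.Adj x y) ∨ i = q ∧ Gᶜ.Adj x y := by
    simp only [colorGraph_adj, complColoring, mem_edgeSet, compl_adj]
    by_cases h : G.Adj x y
    · simp [h, h.ne, eq_comm]
    · simp [h, eq_comm, and_comm]
  have hbot : ∀ i ∉ ({p, q} : Set κ), colorGraph (complColoring G p q) i = ⊥ := by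
    intro i hi
    simp only [Set.mem_insert_iff, Set.mem_singleton_iff, not_or] at hi
    ext x y
    simp [hadj, hi]
  refine ⟨fun x y z _ _ _ ↦ ?_, hbot, fun i ↦ ?_⟩
  · simp only [complColoring]
    split_ifs <;> simp
  · by_cases hi : i ∈ ({p, q} : Set κ)
    · rcases hi with rfl | rfl
      · exact hG.anti fun x y h ↦ by simpa [hadj, hpq] using h
      · exact hGc.anti fun x y h ↦ by simpa [hadj, hpq.symm] using h
    · exact hbot i hi ▸ cliqueFree_bot (hm i)

lemma cliqueFree_three_of_forall {G : SimpleGraph V}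
    (h : ∀ x y, G.Adj x y → ∀ z, G.Adj x z → ¬G.Adj y z) : G.CliqueFree 3 := by
  intro s hs
  obtain ⟨x, y, z, hxy, hxz, hyz, -⟩ := is3Clique_iff.1 hs
  exact h x y hxy z hxz hyz

lemma cliqueFree_four_of_forall {G : SimpleGraph V} (h : ∀ x y, G.Adj x y → ∀ z, G.Adj x z →
    G.Adj y z → ∀ w, G.Adj x w → G.Adj y w → ¬G.Adj z w) : G.CliqueFree 4 := by
  by_contra hG
  let f := topEmbeddingOfNotCliqueFree hG
  have hf {i j : Fin 4} (hij : i ≠ j) : G.Adj (f i) (f j) := f.map_adj_iff.2 hij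
  exact h (f 0) (f 1) (hf (by decide)) (f 2) (hf (by decide)) (hf (by decide)) (f 3)
    (hf (by decide)) (hf (by decide)) (hf (by decide))

lemma cliqueFree_three_cycleGraph_five : (cycleGraph 5).CliqueFree 3 :=
  cliqueFree_three_of_forall (by decide)

lemma cliqueFree_three_compl_cycleGraph_five : (cycleGraph 5)ᶜ.CliqueFree 3 :=
  cliqueFree_three_of_forall (by decide)

/-- The Paley graph on 17 vertices, which shows that the Ramsey number `R(4, 4)` exceeds 17: its
edges join the numbers whose difference `±1, ±2, ±4, ±8` is a nonzero square modulo 17. -/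
def paleySeventeen : SimpleGraph (Fin 17) := circulantGraph ({1, 2, 4, 8} : Finset (Fin 17))

instance : DecidableRel paleySeventeen.Adj := inferInstanceAs (DecidableRel (circulantGraph _).Adj)

lemma cliqueFree_four_paleySeventeen : paleySeventeen.CliqueFree 4 :=
  cliqueFree_four_of_forall (by decide +kernel)

lemma cliqueFree_four_compl_paleySeventeen : paleySeventeenᶜ.CliqueFree 4 :=
  cliqueFree_four_of_forall (by decide +kernel)

end LowerBound

/-! ### The Gallai–Ramsey number -/

section GallaiRamseyNumber

variable {k n N : ℕ} {F : Fin k → Σ V : Type, SimpleGraph V}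

lemma IsGallai.isGallaiColoring {c : Sym2 (Fin n) → Fin k} (hc : IsGallai c) :
    IsGallaiColoring fun x y ↦ c s(x, y) := by
  refine ⟨fun _ _ ↦ congrArg c Sym2.eq_swap, ?_⟩
  rintro ⟨x, y, z, hxy, hxz, hyz, h₁, h₂, h₃⟩
  rcases hc hxy hxz hyz with h | h | h
  exacts [h₁ h, h₂ h, h₃ h]

lemma exists_isGallai_of_isGallaiColoring {c : Fin n → Fin n → Fin k} (hc : IsGallaiColoring c) :
    ∃ c' : Sym2 (Fin n) → Fin k, IsGallai c' ∧ c = fun x y ↦ c' s(x, y) := by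
  refine ⟨Sym2.lift ⟨c, hc.1⟩, fun x y z hxy hxz hyz ↦ ?_, rfl⟩
  by_contra! h
  exact hc.2 ⟨x, y, z, hxy, hxz, hyz, h⟩

lemma hasMonoCopy_iff_isContained {V : Type} {H : SimpleGraph V} {c : Sym2 (Fin n) → Fin k}
    {i : Fin k} : HasMonoCopy H (fun x y ↦ c s(x, y)) i ↔ H ⊑ colorGraph c i := by
  constructor
  · rintro ⟨f, hf, hcol⟩
    exact ⟨⟨⟨f, fun h ↦ colorGraph_adj.2 ⟨hcol _ _ h, hf.ne h.ne⟩⟩, hf⟩⟩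
  · rintro ⟨f⟩
    exact ⟨f, f.injective, fun _ _ h ↦ (colorGraph_adj.1 (f.toHom.map_adj h)).1⟩

theorem GR_eq_add_one
    (hupper : ∀ (n : ℕ) (c : Sym2 (Fin n) → Fin k), IsGallai c →
      (∀ i, (F i).2.Free (colorGraph c i)) → n ≤ N)
    (hlower : ∃ c : Sym2 (Fin N) → Fin k, IsGallai c ∧ ∀ i, (F i).2.Free (colorGraph c i)) :
    GR k F = N + 1 := by
  obtain ⟨d, hd, hfree⟩ := hlower
  suffices h : {n : ℕ | ∀ c : Fin n → Fin n → Fin k, IsGallaiColoring c →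
      ∃ i, HasMonoCopy (F i).2 c i} = Set.Ici (N + 1) by
    rw [GR, h, csInf_Ici]
  ext n
  refine ⟨fun h ↦ ?_, fun (hn : N < n) c hc ↦ ?_⟩
  · by_contra hn
    have hnN : n ≤ N := by simpa [Nat.lt_succ_iff] using hn
    have hinj := Fin.castLE_injective hnN
    obtain ⟨i, hi⟩ := h _ (hd.comp_map hinj).isGallaiColoring
    rw [hasMonoCopy_iff_isContained, colorGraph_comp_map _ hinj] at hi
    exact hfree i (hi.trans (Embedding.comap ⟨_, hinj⟩ _).isContained)
  · obtain ⟨c, hc', rfl⟩ := exists_isGallai_of_isGallaiColoring hc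
    by_contra! hmono
    exact hn.not_ge (hupper n c hc' fun i hi ↦ hmono i (hasMonoCopy_iff_isContained.2 hi))

end GallaiRamseyNumber

section Levels

variable {V : Type*} {G : SimpleGraph V} {U : Finset V}

lemma HasNearClique.gP3_isContained (h : HasNearClique G 1 U) : GP3 ⊑ G := by
  obtain ⟨S, -, hS, u, -, v, -, huv, hSuv⟩ := h
  obtain ⟨x, rfl⟩ := isNClique_one.1 hS
  obtain ⟨hxu, hxv⟩ := hSuv x (Finset.mem_singleton_self x)
  refine ⟨⟨⟨![u, x, v], fun {i j} h ↦ ?_⟩, fun i j h ↦ ?_⟩⟩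
  · fin_cases i <;> fin_cases j <;> simp_all [GP3, hxu.symm, hxv.symm]
  · fin_cases i <;> fin_cases j <;> simp_all [hxu.ne, hxv.ne, hxu.ne', hxv.ne', huv.symm]

lemma HasNearClique.gK3_isContained (h : HasNearClique G 2 U) : GK3 ⊑ G := by
  obtain ⟨S, -, hS, u, -, v, -, -, hSuv⟩ := h
  exact (not_cliqueFree_iff_top_isContained 3).1
    (hS.insert fun x hx ↦ (hSuv x hx).1.symm).not_cliqueFree

lemma HasNearClique.gH3_isContained (h : HasNearClique G 3 U) : GH3 ⊑ G := by
  obtain ⟨S, -, hS, u, -, v, -, huv, hSuv⟩ := h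
  obtain ⟨x, y, z, hxy, hxz, hyz, rfl⟩ := is3Clique_iff.1 hS
  simp only [Finset.mem_insert, Finset.mem_singleton, forall_eq_or_imp, forall_eq] at hSuv
  obtain ⟨⟨hxu, hxv⟩, ⟨hyu, hyv⟩, hzu, hzv⟩ := hSuv
  refine ⟨⟨⟨![u, v, x, y, z], fun {i j} h ↦ ?_⟩, fun i j h ↦ ?_⟩⟩
  · fin_cases i <;> fin_cases j <;> simp_all [GH3, G.adj_comm]
  · fin_cases i <;> fin_cases j <;>
      simp_all [hxu.ne, hxu.ne', hxv.ne, hxv.ne', hyu.ne, hyu.ne', hyv.ne, hyv.ne', hzu.ne, hzu.ne',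
        hzv.ne, hzv.ne', hxy.ne, hxy.ne', hxz.ne, hxz.ne', hyz.ne, hyz.ne', huv.symm]

lemma gP3_free_of_unique_adj (h : ∀ x y z, G.Adj x y → G.Adj x z → y = z) : GP3.Free G := by
  rintro ⟨f⟩
  have h₀ : GP3.Adj 1 0 := by simp [GP3]
  have h₂ : GP3.Adj 1 2 := by simp [GP3]
  have := f.injective (h _ _ _ (f.toHom.map_adj h₀) (f.toHom.map_adj h₂))
  simp at this

/-- The graph forbidden in a color of level `ℓ`. For `ℓ = 1` this is `K₃` rather than `K₄` minus an
edge: avoiding it is a stronger condition, which the extremal coloring satisfies as well. -/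
def levelGraph : Fin 3 → Σ V : Type, SimpleGraph V :=
  ![⟨Fin 3, GP3⟩, ⟨Fin 3, GK3⟩, ⟨Fin 5, GH3⟩]

lemma not_hasNearClique_of_levelGraph_free {l : Fin 3} (h : (levelGraph l).2.Free G) :
    ¬HasNearClique G (l + 1) U := by
  intro hU
  fin_cases l
  exacts [h hU.gP3_isContained, h hU.gK3_isContained, h hU.gH3_isContained]

lemma top_isContained_levelGraph (l : Fin 3) :
    completeGraph (Fin (l + 2)) ⊑ (levelGraph l).2 := by
  fin_cases l
  · refine ⟨⟨⟨Fin.castSucc, fun {i j} h ↦ ?_⟩, Fin.castSucc_injective 2⟩⟩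
    fin_cases i <;> fin_cases j <;> simp_all [levelGraph, GP3]
  · exact .refl _
  · refine ⟨⟨⟨Fin.succ, fun {i j} h ↦ ?_⟩, Fin.succ_injective 4⟩⟩
    fin_cases i <;> fin_cases j <;> simp_all [levelGraph, GH3]

lemma levelGraph_free_of_cliqueFree {l : Fin 3} (h : G.CliqueFree (l + 2)) :
    (levelGraph l).2.Free G := fun hG ↦
  (not_cliqueFree_iff_top_isContained _).2 ((top_isContained_levelGraph l).trans hG) h

/-- The level of the color `i` in the family `mixPKH k s r`. -/
def mixLevel (s r i : ℕ) : Fin 3 :=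
  if i < r then 2 else if i < r + s then 1 else 0

lemma mixLevel_of_lt {s r i : ℕ} (h : i < r) : mixLevel s r i = 2 := if_pos h

lemma mixLevel_of_mem_Ico {s r i : ℕ} (h : i ∈ Set.Ico r (r + s)) : mixLevel s r i = 1 := by
  rw [mixLevel, if_neg h.1.not_gt, if_pos h.2]

lemma mixLevel_of_le {s r i : ℕ} (h : r + s ≤ i) : mixLevel s r i = 0 := by
  rw [mixLevel, if_neg (by omega), if_neg h.not_gt]

lemma mixPKH_apply {k s r : ℕ} (i : Fin k) : mixPKH k s r i = levelGraph (mixLevel s r i) := by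
  unfold mixPKH mixLevel
  split_ifs <;> rfl

lemma prod_levelWeight_mixLevel {k a b : ℕ} (h : 2 * a + 2 * b ≤ k) :
    ∏ i : Fin k, levelWeight (mixLevel (2 * b) (2 * a) i) = 5 ^ b * 17 ^ a := by
  obtain ⟨d, rfl⟩ := Nat.exists_eq_add_of_le h
  have h₂ : ∀ i ∈ Finset.range (2 * a), levelWeight (mixLevel (2 * b) (2 * a) i) = √17 :=
    fun i hi ↦ by rw [mixLevel_of_lt (Finset.mem_range.1 hi)]; rfl
  have h₁ : ∀ i ∈ Finset.range (2 * b),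
      levelWeight (mixLevel (2 * b) (2 * a) (2 * a + i)) = √5 :=
    fun i hi ↦ by rw [mixLevel_of_mem_Ico (by simpa using hi)]; rfl
  have h₀ : ∀ i ∈ Finset.range d,
      levelWeight (mixLevel (2 * b) (2 * a) (2 * a + 2 * b + i)) = 1 :=
    fun i _ ↦ by rw [mixLevel_of_le (by omega)]; rfl
  rw [Fin.prod_univ_eq_prod_range fun i ↦ levelWeight (mixLevel (2 * b) (2 * a) i),
    Finset.prod_range_add, Finset.prod_range_add, Finset.prod_congr rfl h₂,
    Finset.prod_congr rfl h₁, Finset.prod_congr rfl h₀]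
  simp [pow_mul, mul_comm (17 ^ a : ℝ)]

lemma card_le_of_mixPKH_free {k n a b : ℕ} (h : 2 * a + 2 * b ≤ k) {c : Sym2 (Fin n) → Fin k}
    (hc : IsGallai c) (hfree : ∀ i, (mixPKH k (2 * b) (2 * a) i).2.Free (colorGraph c i)) :
    n ≤ 2 * 5 ^ b * 17 ^ a := by
  have hlevels : HasLevels c (fun i ↦ mixLevel (2 * b) (2 * a) i) Finset.univ := fun i ↦
    not_hasNearClique_of_levelGraph_free (mixPKH_apply i ▸ hfree i)
  have hcard := hc.levelBound Finset.univ _ hlevels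
  rw [prod_levelWeight_mixLevel h, Finset.card_univ, Fintype.card_fin, ← mul_assoc] at hcard
  exact_mod_cast hcard

lemma exists_isCliqueBounded_pair {k a b j : ℕ} (h : 2 * a + 2 * b ≤ k) (hj : j < a + b) :
    ∃ c : Sym2 (Fin (if j < a then 17 else 5)) → Fin k,
      IsCliqueBounded c (fun i ↦ mixLevel (2 * b) (2 * a) i + 2) {i | (i : ℕ) / 2 = j} := by
  let p : Fin k := ⟨2 * j, by omega⟩
  let q : Fin k := ⟨2 * j + 1, by omega⟩
  have hpq : p ≠ q := by simp [p, q]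
  have hsub : {p, q} ⊆ {i : Fin k | (i : ℕ) / 2 = j} := by
    rintro i (rfl | rfl)
    · exact Nat.mul_div_cancel_left j two_pos
    · exact Nat.mul_add_div two_pos j 1
  have hbounded {N : ℕ} (G : SimpleGraph (Fin N)) {l : Fin 3}
      (hp : mixLevel (2 * b) (2 * a) p = l) (hq : mixLevel (2 * b) (2 * a) q = l)
      (hG : G.CliqueFree (l + 2)) (hGc : Gᶜ.CliqueFree (l + 2)) :
      ∃ c : Sym2 (Fin N) → Fin k, IsCliqueBounded c
        (fun i ↦ mixLevel (2 * b) (2 * a) i + 2) {i | (i : ℕ) / 2 = j} :=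
    ⟨_, (isCliqueBounded_complColoring (G := G) (by simp) hpq (by rwa [hp])
      (by rwa [hq])).mono hsub⟩
  by_cases hja : j < a
  · rw [if_pos hja]
    exact hbounded paleySeventeen (mixLevel_of_lt (by lia)) (mixLevel_of_lt (by lia))
      cliqueFree_four_paleySeventeen cliqueFree_four_compl_paleySeventeen
  · rw [if_neg hja]
    exact hbounded (cycleGraph 5) (mixLevel_of_mem_Ico ⟨by lia, by lia⟩)
      (mixLevel_of_mem_Ico ⟨by lia, by lia⟩) cliqueFree_three_cycleGraph_five
      cliqueFree_three_compl_cycleGraph_five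

lemma exists_isCliqueBounded_mixLevel {k a b : ℕ} (h : 2 * a + 2 * b < k) :
    ∃ (V : Type) (c : Sym2 V → Fin k), Nat.card V = 5 ^ b * 17 ^ a ∧
      IsCliqueBounded c (fun i ↦ mixLevel (2 * b) (2 * a) i + 2)
        {i | (i : ℕ) < 2 * a + 2 * b} := by
  have hdisj : (Finset.range (a + b) : Set ℕ).PairwiseDisjoint
      fun j ↦ {i : Fin k | (i : ℕ) / 2 = j} := fun j _ j' _ hjj' ↦
    Set.disjoint_left.2 fun i hi hi' ↦ hjj' (hi.symm.trans hi')
  have : NeZero k := ⟨by omega⟩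
  obtain ⟨V, c, hV, hc⟩ := IsCliqueBounded.exists_prod _ (by simp) hdisj
    fun j hj ↦ exists_isCliqueBounded_pair h.le (Finset.mem_range.1 hj)
  refine ⟨V, c, ?_, hc.mono ?_⟩
  · have ha : ∀ j ∈ Finset.range a, (if j < a then 17 else 5) = 17 := fun j hj ↦
      if_pos (Finset.mem_range.1 hj)
    rw [hV, Finset.prod_range_add, Finset.prod_congr rfl ha]
    simp [mul_comm]
  · simp only [Set.iUnion_subset_iff, Set.ofPred_subset_ofPred, Finset.mem_range]
    omega

lemma exists_isGallai_mixPKH_free {k a b : ℕ} (h : 2 * a + 2 * b < k) :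
    ∃ c : Sym2 (Fin (2 * 5 ^ b * 17 ^ a)) → Fin k,
      IsGallai c ∧ ∀ i, (mixPKH k (2 * b) (2 * a) i).2.Free (colorGraph c i) := by
  obtain ⟨V, d, hV, hd⟩ := exists_isCliqueBounded_mixLevel h
  have : Finite V := Nat.finite_of_card_ne_zero (by rw [hV]; positivity)
  let e : Fin k := ⟨2 * a + 2 * b, h⟩
  have he : mixLevel (2 * b) (2 * a) e = 0 := mixLevel_of_le le_rfl
  rw [mul_assoc, ← hV]
  obtain ⟨c, hc, hfree, hmatch⟩ := hd.exists_double (e := e) (by simp [e])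
  refine ⟨c, hc, fun i ↦ ?_⟩
  rw [mixPKH_apply]
  obtain rfl | hi := eq_or_ne i e
  · rw [he]
    exact gP3_free_of_unique_adj hmatch
  · exact levelGraph_free_of_cliqueFree (hfree i hi)

end Levels

end GallaiRamsey

/-- Theorem 1.5, case (b₂): s, r both even and s + r < k implies
GR_k((k-s-r)P₃, sK₃, rH₃) = 2·5^(s/2)·17^(r/2) + 1. -/
theorem GR_mixPKH_b2 (k s r : ℕ) (hk : 1 ≤ k) (hs : Even s) (hr : Even r)
    (hsr : s + r < k) :
    GR k (mixPKH k s r) = 2 * 5 ^ (s / 2) * 17 ^ (r / 2) + 1 := by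
  obtain ⟨b, rfl⟩ := even_iff_exists_two_mul.1 hs
  obtain ⟨a, rfl⟩ := even_iff_exists_two_mul.1 hr
  rw [Nat.mul_div_cancel_left b two_pos, Nat.mul_div_cancel_left a two_pos]
  rw [add_comm] at hsr
  exact GallaiRamsey.GR_eq_add_one (fun _ _ hc ↦ GallaiRamsey.card_le_of_mixPKH_free hsr.le hc)
    (GallaiRamsey.exists_isGallai_mixPKH_free hsr)
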